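/- arXiv:1704.04256 — 5 statements merged into one kernel-verified Lean document; each statement's English description precedes it below -/
import Mathlib

section
/- Let G be a finite group and V an irreducible complex representation of G. Then dim V divides the index [G : Z(G)] of the center of G. -/
open CategoryTheory Module

/-- The trace of an endomorphism of finite order is an algebraic integer. -/
theorem LinearMap.isIntegral_trace_of_pow_eq_one {K V : Type*} [Field K] [IsAlgClosed K]
    [AddCommGroup V] [Module K V] [FiniteDimensional K V] {f : End K V} {n : ℕ} (hn : 0 < n)
    (hf : f ^ n = 1) : IsIntegral ℤ (LinearMap.trace K V f) := by
  rw [Module.End.trace_eq_sum_roots_charpoly_of_splits (IsAlgClosed.splits _)]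
  refine IsIntegral.multiset_sum fun μ hμ ↦ ?_
  obtain ⟨v, hv⟩ := ((Module.End.hasEigenvalue_iff_isRoot_charpoly f μ).2
    (Polynomial.isRoot_of_mem_roots hμ)).exists_hasEigenvector
  have hv_pow := hv.pow_apply n
  rw [hf, Module.End.one_apply] at hv_pow
  have hμ_pow : μ ^ n = 1 := smul_left_injective K hv.2 (by simp [← hv_pow])
  exact IsIntegral.of_pow hn (hμ_pow ▸ isIntegral_one)

/-- If the scalar `c` acts as a combination of group elements with algebraic integer
coefficients, then `c` is an algebraic integer. -/
theorem Representation.isIntegral_of_sum_smul_eq_algebraMap {K G V ι : Type*} [Field K] [Group G]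
    [Finite G] [AddCommGroup V] [Module K V] [Nontrivial V] (ρ : Representation K G V)
    (s : Finset ι) (a : ι → K) (x : ι → G) (ha : ∀ i ∈ s, IsIntegral ℤ (a i)) {c : K}
    (hc : ∑ i ∈ s, a i • ρ (x i) = algebraMap K (End K V) c) : IsIntegral ℤ c := by
  let O := integralClosure ℤ K
  let φ : MonoidAlgebra O G →ₐ[O] End K V := MonoidAlgebra.lift O _ G ρ
  have hmem : algebraMap K (End K V) c ∈ φ.range := by
    rw [← hc]
    refine Subalgebra.sum_mem _ fun i hi ↦ ⟨MonoidAlgebra.single (x i) ⟨a i, ha i hi⟩, ?_⟩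
    simp only [φ, RingHom.coe_coe, AlgHom.toRingHom_eq_coe, MonoidAlgebra.lift_single]
    rfl
  obtain ⟨y, hy⟩ := hmem
  have hint : IsIntegral O (algebraMap K (End K V) c) :=
    hy ▸ (Algebra.IsIntegral.isIntegral (R := O) y).map φ
  exact isIntegral_trans (R := ℤ) (A := O) c
    ((isIntegral_algebraMap_iff (algebraMap K (End K V)).injective).1 hint)

/-- A function invariant under right translation by a subgroup `H` sums to `|H|` times its sum
over coset representatives. -/
theorem Subgroup.sum_eq_card_nsmul_sum_out {G M : Type*} [Group G] [Fintype G] [AddCommMonoid M]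
    (H : Subgroup G) [Fintype (G ⧸ H)] (f : G → M) (hf : ∀ g, ∀ h ∈ H, f (g * h) = f g) :
    ∑ g, f g = Nat.card H • ∑ q : G ⧸ H, f q.out := by
  have hbij : Function.Bijective fun p : (G ⧸ H) × H ↦ p.1.out * (p.2 : G) := by
    refine ⟨fun p p' hp ↦ ?_, fun g ↦ ?_⟩
    · have hq : p.1 = p'.1 := by
        simpa using congrArg (QuotientGroup.mk (s := H)) hp
      refine Prod.ext hq (Subtype.ext ?_)
      simpa [hq] using hp
    · obtain ⟨h, hh⟩ := QuotientGroup.mk_out_eq_mul H g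
      exact ⟨(g, h⁻¹), by simp [hh]⟩
  have : Fintype H := Fintype.ofFinite H
  rw [← hbij.sum_comp f, Fintype.sum_prod_type, Finset.smul_sum]
  exact Finset.sum_congr rfl fun q _ ↦ by simp [hf]

namespace FDRep

/-- Schur's lemma: an endomorphism commuting with a simple representation is a scalar. -/
theorem exists_eq_algebraMap_of_comm {k G : Type} [Field k] [IsAlgClosed k] [Group G]
    (V : FDRep k G) [Simple V] (T : End k V) (hT : ∀ g, T * V.ρ g = V.ρ g * T) :
    ∃ c : k, T = algebraMap k (End k V) c := by
  have hmem (S : End k V) (hS : ∀ g, S * V.ρ g = V.ρ g * S) :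
      S ∈ (Representation.linHom V.ρ V.ρ).invariants := fun g ↦ by
    change V.ρ g * (S * V.ρ g⁻¹) = S
    rw [hS, ← mul_assoc, ← map_mul, mul_inv_cancel, map_one, one_mul]
  have hrank : finrank k (Representation.linHom V.ρ V.ρ).invariants = 1 := by
    rw [(Representation.linHom.invariantsEquivFDRepHom V V).finrank_eq,
      finrank_hom_simple_simple, if_pos ⟨Iso.refl V⟩]
  have hone : (⟨1, hmem 1 fun g ↦ by simp⟩ : (Representation.linHom V.ρ V.ρ).invariants) ≠ 0 := by
    intro h
    have hone_eq : (1 : End k V) = 0 := congrArg Subtype.val h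
    have : Subsingleton (Representation.linHom V.ρ V.ρ).invariants :=
      ⟨fun S S' ↦ Subtype.ext <| by
        have := subsingleton_of_zero_eq_one hone_eq.symm
        exact Subsingleton.elim (α := End k V) _ _⟩
    simp [finrank_zero_of_subsingleton] at hrank
  obtain ⟨c, hc⟩ := (finrank_eq_one_iff_of_nonzero' _ hone).1 hrank ⟨T, hmem T hT⟩
  exact ⟨c, by rw [Algebra.algebraMap_eq_smul_one]; exact (congrArg Subtype.val hc).symm⟩

/-- Central elements act on a simple representation by scalars. -/
theorem exists_ρ_eq_algebraMap_of_mem_center {k G : Type} [Field k] [IsAlgClosed k] [Group G]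
    (V : FDRep k G) [Simple V] {z : G} (hz : z ∈ Subgroup.center G) :
    ∃ c : k, V.ρ z = algebraMap k (End k V) c :=
  V.exists_eq_algebraMap_of_comm _ fun g ↦ by
    rw [← map_mul, ← map_mul, Subgroup.mem_center_iff.1 hz g]

theorem char_inv_smul_ρ_mul_of_mem_center {k G : Type} [Field k] [IsAlgClosed k] [Group G]
    (V : FDRep k G) [Simple V] (g : G) {z : G} (hz : z ∈ Subgroup.center G) :
    V.character (g * z)⁻¹ • V.ρ (g * z) = V.character g⁻¹ • V.ρ g := by
  obtain ⟨c, hc⟩ := V.exists_ρ_eq_algebraMap_of_mem_center hz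
  have hchar : V.character g⁻¹ = c * V.character (g * z)⁻¹ := by
    have hg : g⁻¹ = z * (g * z)⁻¹ := by group
    rw [hg, character, map_mul, hc, ← Algebra.smul_def, map_smul, smul_eq_mul, character]
  rw [hchar, map_mul, hc, ← Algebra.commutes, ← Algebra.smul_def, smul_smul, mul_comm]

theorem sum_char_inv_smul_ρ_comm {k G : Type} [Field k] [Group G] [Fintype G]
    (V : FDRep k G) (h : G) :
    (∑ g, V.character g⁻¹ • V.ρ g) * V.ρ h = V.ρ h * ∑ g, V.character g⁻¹ • V.ρ g := by
  rw [Finset.sum_mul, Finset.mul_sum, ← (MulAut.conj h).toEquiv.sum_comp]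
  refine Finset.sum_congr rfl fun g _ ↦ ?_
  have hinv : (h * g * h⁻¹)⁻¹ = h * g⁻¹ * h⁻¹ := by group
  simp only [MulEquiv.toEquiv_eq_coe, EquivLike.coe_coe, MulAut.conj_apply, smul_mul_assoc,
    mul_smul_comm]
  rw [hinv, char_conj, ← map_mul, ← map_mul, inv_mul_cancel_right]

theorem isIntegral_character {k G : Type} [Field k] [IsAlgClosed k] [Group G] [Finite G]
    (V : FDRep k G) (g : G) : IsIntegral ℤ (V.character g) :=
  LinearMap.isIntegral_trace_of_pow_eq_one (Nat.card_pos (α := G))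
    (by rw [← map_pow, pow_card_eq_one', map_one])

end FDRep

/-- Schur's theorem: the dimension of an irreducible complex representation of a finite
group `G` divides the index of the center of `G`. -/
theorem stmt_8 (G : Type) [Group G] [Fintype G] (V : FDRep ℂ G)
    [CategoryTheory.Simple V] :
    Module.finrank ℂ V ∣ (Subgroup.center G).index := by
  classical
  have hZ : (Nat.card (Subgroup.center G) : ℂ) ≠ 0 := Nat.cast_ne_zero.2 Nat.card_pos.ne'
  have hnorm := (FDRep.simple_iff_char_is_norm_one V).1 inferInstance
  have hcard : (Nat.card G : ℂ) ≠ 0 := Nat.cast_ne_zero.2 Nat.card_pos.ne'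
  set T : End ℂ V := ∑ q : G ⧸ Subgroup.center G, V.character q.out⁻¹ • V.ρ q.out with hT
  have hsum : ∑ g, V.character g⁻¹ • V.ρ g = (Nat.card (Subgroup.center G) : ℂ) • T := by
    rw [Nat.cast_smul_eq_nsmul]
    exact Subgroup.sum_eq_card_nsmul_sum_out _ (fun g ↦ V.character g⁻¹ • V.ρ g)
      fun g z hz ↦ V.char_inv_smul_ρ_mul_of_mem_center g hz
  obtain ⟨c, hc⟩ := V.exists_eq_algebraMap_of_comm T fun g ↦ by
    have hcomm := V.sum_char_inv_smul_ρ_comm g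
    rw [hsum, smul_mul_assoc, mul_smul_comm] at hcomm
    exact smul_right_injective _ hZ hcomm
  have htrace : (Nat.card G : ℂ) = Nat.card (Subgroup.center G) * (c * finrank ℂ V) := by
    have h := congrArg (LinearMap.trace ℂ V) hsum
    rw [hc, Algebra.algebraMap_eq_smul_one, map_smul, map_smul, LinearMap.trace_one, map_sum] at h
    rw [← hnorm, ← smul_eq_mul, ← smul_eq_mul c, ← h]
    refine Finset.sum_congr rfl fun g _ ↦ ?_
    rw [map_smul, smul_eq_mul, mul_comm]
    rfl
  have hindex : c * finrank ℂ V = (Subgroup.center G).index := by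
    refine mul_left_cancel₀ hZ ?_
    rw [← htrace, ← Nat.cast_mul, Subgroup.card_mul_index]
  have hdim : (finrank ℂ V : ℂ) ≠ 0 := fun h ↦ hcard (by rw [htrace, h, mul_zero, mul_zero])
  have : Nontrivial V := nontrivial_of_finrank_pos (R := ℂ)
    (Nat.pos_of_ne_zero (Nat.cast_ne_zero.1 hdim))
  have hint : IsIntegral ℤ c :=
    Representation.isIntegral_of_sum_smul_eq_algebraMap V.ρ Finset.univ _ _
      (fun q _ ↦ V.isIntegral_character _) (hT.symm.trans hc)
  have hrat : c = algebraMap ℚ ℂ ((Subgroup.center G).index / finrank ℂ V) := by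
    rw [eq_div_of_mul_eq hdim hindex]
    simp
  rw [hrat, isIntegral_algebraMap_iff (algebraMap ℚ ℂ).injective,
    IsIntegrallyClosed.isIntegral_iff] at hint
  obtain ⟨m, hm⟩ := hint
  have hdimQ : (finrank ℂ V : ℚ) ≠ 0 := Nat.cast_ne_zero.2 (Nat.cast_ne_zero.1 hdim)
  rw [← Int.natCast_dvd_natCast]
  refine ⟨m, ?_⟩
  rw [eq_div_iff hdimQ, eq_intCast] at hm
  rw [mul_comm]
  exact_mod_cast hm.symm
end

section
/- Let G be a finite group and V a faithful irreducible complex representation of G. Then dim V divides |G| / |Z(G)|. -/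
namespace Subgroup

variable {G M : Type*} [Group G] [Fintype G] [AddCommMonoid M]

/-- The sum over a finite group of a function constant on the left cosets of a subgroup. -/
theorem sum_eq_card_smul_sum_quotient_out (s : Subgroup G) [Fintype (G ⧸ s)] (f : G → M)
    (hf : ∀ g, ∀ z ∈ s, f (g * z) = f g) :
    ∑ g, f g = Nat.card s • ∑ q : G ⧸ s, f q.out := by
  classical
  have hbij : Function.Bijective fun p : (G ⧸ s) × s ↦ p.1.out * (p.2 : G) := by
    refine ⟨?_, fun g ↦ ?_⟩
    · rintro ⟨q, z⟩ ⟨q', z'⟩ h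
      have hq : q = q' := by
        simpa [QuotientGroup.mk_mul_of_mem] using congrArg (QuotientGroup.mk : G → G ⧸ s) h
      subst hq
      simpa using h
    · exact ⟨⟨g, (g : G ⧸ s).out⁻¹ * g,
        QuotientGroup.eq.mp (QuotientGroup.out_eq' (g : G ⧸ s))⟩, by simp⟩
  rw [← hbij.sum_comp f, Fintype.sum_prod_type]
  simp [hf, Finset.smul_sum, Nat.card_eq_fintype_card]

end Subgroup

namespace Representation

variable {G K V : Type*} [Group G] [Field K] [AddCommGroup V] [Module K V]
  (ρ : Representation K G V)

/-- The operator `∑ g, χ(g⁻¹) ρ(g)` commutes with the representation. -/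
theorem commute_sum_character_inv_smul [Fintype G] (h : G) :
    Commute (∑ g, ρ.character g⁻¹ • ρ g) (ρ h) := by
  rw [Commute, SemiconjBy, Finset.sum_mul, Finset.mul_sum]
  refine (Fintype.sum_equiv (MulAut.conj h).toEquiv _ _ fun g ↦ ?_).symm
  have hinv : (h * g * h⁻¹)⁻¹ = h * g⁻¹ * h⁻¹ := by group
  simp [hinv, ← map_mul]

/-- An algebraic-integer combination of the operators of a representation of a finite group which
happens to be a scalar is given by an algebraic integer. -/
theorem isIntegral_of_sum_smul_eq_smul_one [Finite G] [Nontrivial V] {ι : Type*} [Fintype ι]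
    (a : ι → K) (ha : ∀ i, IsIntegral ℤ (a i)) (x : ι → G) {c : K}
    (hc : ∑ i, a i • ρ (x i) = c • 1) : IsIntegral ℤ c := by
  let R := integralClosure ℤ K
  let φ : MonoidAlgebra R G →ₐ[R] Module.End K V := MonoidAlgebra.lift R _ G ρ
  have hφ : φ (∑ i, MonoidAlgebra.single (x i) (⟨a i, ha i⟩ : R)) =
      algebraMap K (Module.End K V) c := by
    rw [Algebra.algebraMap_eq_smul_one, ← hc, map_sum]
    refine Finset.sum_congr rfl fun i _ ↦ ?_
    rw [MonoidAlgebra.lift_single]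
    rfl
  have hint : IsIntegral R (algebraMap K (Module.End K V) c) :=
    hφ ▸ (Algebra.IsIntegral.isIntegral (R := R) _).map φ
  rw [isIntegral_algebraMap_iff (FaithfulSMul.algebraMap_injective _ _)] at hint
  exact isIntegral_trans c hint

variable [IsAlgClosed K] [FiniteDimensional K V]

/-- The values of a character of a finite group are algebraic integers. -/
theorem isIntegral_character [Finite G] (g : G) : IsIntegral ℤ (ρ.character g) := by
  rw [character, Module.End.trace_eq_sum_roots_charpoly_of_splits (IsAlgClosed.splits _)]
  refine (integralClosure ℤ K).multiset_sum_mem fun μ hμ ↦ ?_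
  have hev : Module.End.HasEigenvalue (ρ g) μ :=
    (Module.End.hasEigenvalue_iff_isRoot_charpoly _ _).mpr (Polynomial.isRoot_of_mem_roots hμ)
  obtain ⟨v, hv⟩ := hev.exists_hasEigenvector
  have hpow : μ ^ Nat.card G • v = v := by
    rw [← hv.pow_apply, ← map_pow, pow_card_eq_one', map_one, Module.End.one_apply]
  have hμ_pow : μ ^ Nat.card G = 1 :=
    smul_left_injective K hv.2 (by simpa using hpow)
  exact IsIntegral.of_pow Nat.card_pos (hμ_pow ▸ isIntegral_one)

variable {ρ} in
/-- **Schur's lemma**: an endomorphism commuting with an irreducible representation is a scalar. -/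
theorem IsIrreducible.exists_eq_smul_one [IsIrreducible ρ] {T : Module.End K V}
    (hT : ∀ g, Commute T (ρ g)) : ∃ c : K, T = c • 1 := by
  obtain ⟨c, hc⟩ := (algebraMap_intertwiningMap_bijective_of_isAlgClosed (ρ := ρ)).2
    ⟨T, fun g ↦ hT g⟩
  exact ⟨c, (congrArg IntertwiningMap.toLinearMap hc).symm⟩

variable {ρ} in
/-- The degree of an irreducible representation divides the index of the center. -/
theorem IsIrreducible.finrank_dvd_index_center [CharZero K] [Fintype G] [IsIrreducible ρ] :
    Module.finrank K V ∣ (Subgroup.center G).index := by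
  classical
  have : Nontrivial V := IsSimpleModule.nontrivial (MonoidAlgebra K G) ρ.asModule
  have hcard : (Nat.card G : K) ≠ 0 := by simp
  have hZ : (Nat.card (Subgroup.center G) : K) ≠ 0 := by simp
  have hd : (Module.finrank K V : K) ≠ 0 := by
    exact_mod_cast (Module.finrank_pos (R := K) (M := V)).ne'
  have := invertibleOfNonzero hcard
  obtain ⟨c, hc⟩ := exists_eq_smul_one ρ.commute_sum_character_inv_smul
  have horth : ∑ g, ρ.character g * ρ.character g⁻¹ = Nat.card G := by
    have h := char_orthonormal ρ ρ
    rw [if_pos ⟨Equiv.refl ρ⟩] at h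
    field_simp at h
    simpa using h
  have htrace : (Nat.card G : K) = c * Module.finrank K V := by
    have h := congrArg (LinearMap.trace K V) hc
    simp only [map_sum, map_smul, LinearMap.trace_one, smul_eq_mul] at h
    rw [← h, ← horth]
    exact Finset.sum_congr rfl fun g _ ↦ mul_comm _ _
  have hcoset : ∀ g, ∀ z ∈ Subgroup.center G,
      ρ.character (g * z)⁻¹ • ρ (g * z) = ρ.character g⁻¹ • ρ g := by
    intro g z hz
    obtain ⟨l, hl⟩ := exists_eq_smul_one (ρ := ρ) (T := ρ z) fun h ↦
      Commute.map (Subgroup.mem_center_iff.mp hz h).symm ρ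
    obtain ⟨m, hm⟩ := exists_eq_smul_one (ρ := ρ) (T := ρ z⁻¹) fun h ↦
      Commute.map (Subgroup.mem_center_iff.mp (inv_mem hz) h).symm ρ
    have hml : m * l = 1 := by
      have h : ρ z⁻¹ * ρ z = 1 := by rw [← map_mul, inv_mul_cancel, map_one]
      rw [hl, hm, smul_mul_smul_comm, one_mul] at h
      exact smul_left_injective K (one_ne_zero (α := Module.End K V)) (by simpa using h)
    simp only [character, mul_inv_rev, map_mul, hl, hm, smul_mul_assoc, mul_smul_comm, one_mul,
      mul_one, map_smul, smul_eq_mul, smul_smul]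
    rw [mul_right_comm, hml, one_mul]
  rw [Subgroup.sum_eq_card_smul_sum_quotient_out (Subgroup.center G) _ hcoset] at hc
  have hc' : ∑ q : G ⧸ Subgroup.center G, ρ.character q.out⁻¹ • ρ q.out =
      (c / Nat.card (Subgroup.center G)) • 1 := by
    rw [div_eq_inv_mul, mul_smul, ← hc, ← Nat.cast_smul_eq_nsmul K, smul_smul,
      inv_mul_cancel₀ hZ, one_smul]
  have hint := ρ.isIntegral_of_sum_smul_eq_smul_one _ (fun _ ↦ ρ.isIntegral_character _) _ hc'
  have hval : c / Nat.card (Subgroup.center G) =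
      algebraMap ℚ K ((Subgroup.center G).index / Module.finrank K V) := by
    have hidx := congrArg (Nat.cast (R := K)) (Subgroup.center G).card_mul_index
    push_cast at hidx
    simp only [map_div₀, map_natCast]
    rw [div_eq_div_iff hZ hd, ← htrace, ← hidx, mul_comm]
  rw [hval, isIntegral_algebraMap_iff (algebraMap ℚ K).injective,
    IsIntegrallyClosed.isIntegral_iff] at hint
  obtain ⟨n, hn⟩ := hint
  have hd' : (Module.finrank K V : ℚ) ≠ 0 := by exact_mod_cast hd
  rw [eq_div_iff hd', eq_intCast] at hn
  refine Int.natCast_dvd_natCast.mp ⟨n, ?_⟩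
  rw [mul_comm]
  exact_mod_cast hn.symm

end Representation

/-- If `V` is a faithful irreducible complex representation of a finite group `G`, then
`dim V` divides `|G| / |Z(G)|`. -/
theorem stmt_9 (G V : Type*) [Group G] [Fintype G]
    [AddCommGroup V] [Module ℂ V] [FiniteDimensional ℂ V]
    (ρ : Representation ℂ G V)
    (hfaith : Function.Injective ρ)
    (hirr : IsSimpleModule (MonoidAlgebra ℂ G) ρ.asModule) :
    Module.finrank ℂ V ∣ Nat.card G / Nat.card (Subgroup.center G) := by
  have : ρ.IsIrreducible := ρ.irreducible_iff_isSimpleModule_asModule.mpr hirr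
  rw [← (Subgroup.center G).index_mul_card, Nat.mul_div_cancel _ Nat.card_pos]
  exact Representation.IsIrreducible.finrank_dvd_index_center (ρ := ρ)
end

section
/- Let G be a finite group, V a faithful irreducible complex representation of G, and n ≥ 1. Let N_n = {(z₁,…,z_n) ∈ Z(G)^n : z₁⋯z_n = 1}. Then V^{⊗n} descends to an irreducible representation of G^n/N_n, and hence (dim V)^n divides |G|^n / |Z(G)|^{n-1}. -/
open scoped TensorProduct

namespace Representation

section AlgClosed

variable {k G V : Type*} [Field k] [IsAlgClosed k] [Group G] [AddCommGroup V] [Module k V]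
  [FiniteDimensional k V] (ρ : Representation k G V) [ρ.IsIrreducible]

/-- **Schur's lemma**: an endomorphism commuting with an irreducible representation is scalar. -/
theorem IsIrreducible.exists_eq_smul_one_of_commute (T : Module.End k V)
    (hT : ∀ g, Commute T (ρ g)) : ∃ c : k, T = c • 1 := by
  let f : IntertwiningMap ρ ρ := ⟨T, fun g => hT g⟩
  obtain ⟨c, hc⟩ := (algebraMap_intertwiningMap_bijective_of_isAlgClosed (ρ := ρ)).2 f
  refine ⟨c, ?_⟩
  ext v
  exact (DFunLike.congr_fun hc v).symm

/-- **Burnside's theorem**: the operators of an irreducible representation span all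
endomorphisms. -/
theorem IsIrreducible.span_range_eq_top : Submodule.span k (Set.range ρ) = ⊤ := by
  rw [eq_top_iff]
  rintro T -
  let T' : Module.End (Module.End (MonoidAlgebra k G) ρ.asModule) ρ.asModule :=
    { toFun := fun v => T v
      map_add' := fun v w => T.map_add v w
      map_smul' := fun φ v => by
        obtain ⟨c, rfl⟩ :=
          (IsSimpleModule.algebraMap_end_bijective_of_isAlgClosed (A := MonoidAlgebra k G)
            (V := ρ.asModule) k).2 φ
        exact T.map_smul c v }
  let b := Module.finBasis k V
  classical
  obtain ⟨r, hr⟩ := jacobson_density T' (Finset.univ.image b)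
  have hT : T = ρ.asAlgebraHom r := b.ext fun i =>
    hr (b i) (Finset.mem_image_of_mem b (Finset.mem_univ i))
  rw [hT]
  clear hT hr
  induction r using MonoidAlgebra.induction_linear with
  | zero => simp
  | add x y hx hy => rw [map_add]; exact Submodule.add_mem _ hx hy
  | single g a =>
    rw [asAlgebraHom_single]
    exact Submodule.smul_mem _ _ (Submodule.subset_span ⟨g, rfl⟩)

end AlgClosed

/-- The trace of an endomorphism of finite order is an algebraic integer. -/
theorem _root_.LinearMap.isIntegral_trace_of_pow_eq_one_s11 {k V : Type*} [Field k] [IsAlgClosed k]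
    [AddCommGroup V] [Module k V] [FiniteDimensional k V] (f : Module.End k V) {m : ℕ}
    (hm : 0 < m) (hf : f ^ m = 1) : IsIntegral ℤ (LinearMap.trace k V f) := by
  rw [Module.End.trace_eq_sum_roots_charpoly_of_splits (IsAlgClosed.splits _)]
  refine IsIntegral.multiset_sum fun μ hμ => ?_
  have hμ' := (Module.End.hasEigenvalue_iff_isRoot_charpoly f μ).2
    (Polynomial.isRoot_of_mem_roots hμ)
  obtain ⟨v, hv⟩ := hμ'.exists_hasEigenvector
  have h := hv.pow_apply m
  rw [hf] at h
  refine IsIntegral.of_pow hm ?_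
  have : μ ^ m = 1 := by
    have : (μ ^ m - 1) • v = 0 := by rw [sub_smul, ← h]; simp
    rcases smul_eq_zero.1 this with h | h
    · exact sub_eq_zero.1 h
    · exact (hv.2 h).elim
  rw [this]
  exact isIntegral_one

/-- **Frobenius divisibility**: the degree of an irreducible complex representation divides the
order of the group. -/
theorem IsIrreducible.finrank_dvd_card {G V : Type*} [Group G] [Finite G] [AddCommGroup V]
    [Module ℂ V] [FiniteDimensional ℂ V] (ρ : Representation ℂ G V) [ρ.IsIrreducible] :
    Module.finrank ℂ V ∣ Nat.card G := by
  have := Fintype.ofFinite G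
  have hne : (Nat.card G : ℂ) ≠ 0 := Nat.cast_ne_zero.2 Nat.card_pos.ne'
  have : Invertible (Nat.card G : ℂ) := invertibleOfNonzero hne
  have : Nontrivial V := IsSimpleModule.nontrivial (MonoidAlgebra ℂ G) ρ.asModule
  let T : Module.End ℂ V := ∑ g, ρ.character g⁻¹ • ρ g
  obtain ⟨c, hc⟩ := exists_eq_smul_one_of_commute ρ T fun h => by
    simp only [T, Commute, SemiconjBy, Finset.sum_mul, Finset.mul_sum, smul_mul_assoc,
      mul_smul_comm, ← map_mul]
    refine Fintype.sum_equiv (MulAut.conj h⁻¹).toEquiv _ _ fun g => ?_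
    have := ρ.char_conj g⁻¹ h⁻¹
    simp_all [mul_assoc]
  have hcd : c * Module.finrank ℂ V = Nat.card G := by
    have h1 := card_inv_mul_sum_char_mul_char_eq_finrank ρ ρ
    rw [finrank_intertwiningMap_self, inv_mul_eq_iff_eq_mul₀ hne] at h1
    have h2 := congrArg (LinearMap.trace ℂ V) hc
    simp only [T, map_sum, map_smul, LinearMap.trace_one, smul_eq_mul] at h2
    rw [← h2, ← mul_one (Nat.card G : ℂ), ← Nat.cast_one, ← h1]
    exact Finset.sum_congr rfl fun g _ => mul_comm _ _
  have hint : IsIntegral ℤ c := by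
    let R := integralClosure ℤ ℂ
    have hχ : ∀ g, ρ.character g ∈ R := fun g =>
      LinearMap.isIntegral_trace_of_pow_eq_one_s11 (ρ g) Nat.card_pos
        (by rw [← map_pow, pow_card_eq_one', map_one])
    let Ω : MonoidAlgebra R G := ∑ g, MonoidAlgebra.single g ⟨_, hχ g⁻¹⟩
    have hΩ : IsIntegral R Ω := Algebra.IsIntegral.isIntegral Ω
    have hT : IsIntegral R T := by
      convert hΩ.map (MonoidAlgebra.lift R (Module.End ℂ V) G ρ)
      simp [Ω, T]
      rfl
    rw [hc, ← Algebra.algebraMap_eq_smul_one] at hT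
    have := (isIntegral_algebraMap_iff (FaithfulSMul.algebraMap_injective ℂ (Module.End ℂ V))).1 hT
    exact isIntegral_trans c this
  have hd : (Module.finrank ℂ V : ℂ) ≠ 0 := Nat.cast_ne_zero.2 Module.finrank_pos.ne'
  obtain ⟨z, hz⟩ := hint.exists_int_iff_exists_rat.1
    ⟨(Nat.card G : ℚ) / Module.finrank ℂ V, by push_cast; rw [eq_div_iff hd, hcd]⟩
  rw [← Int.natCast_dvd_natCast]
  refine ⟨z, ?_⟩
  rw [hz] at hcd
  rw [mul_comm]
  exact_mod_cast hcd.symm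

/-- External tensor powers of an irreducible representation over an algebraically closed field are
irreducible. -/
theorem isIrreducible_piTensorProduct {k G H V ι : Type*} [Field k] [IsAlgClosed k] [Group G]
    [Monoid H] [AddCommGroup V] [Module k V] [FiniteDimensional k V] [Fintype ι]
    (ρ : Representation k G V) [ρ.IsIrreducible] (σ : Representation k H (⨂[k] _ : ι, V))
    (hσ : ∀ f : ι → G, ∃ h, σ h = PiTensorProduct.map fun i => ρ (f i)) : σ.IsIrreducible := by
  have : Nontrivial V := IsSimpleModule.nontrivial (MonoidAlgebra k G) ρ.asModule
  let b := Module.finBasis k V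
  let B := Basis.piTensorProduct fun _ : ι => b
  have hpos : 0 < Module.finrank k V := Module.finrank_pos
  have hnt : Nontrivial (⨂[k] _ : ι, V) := ⟨B fun _ => ⟨0, hpos⟩, 0, B.ne_zero _⟩
  have hnt' : Nontrivial (Subrepresentation σ) := by
    refine ⟨⊥, ⊤, fun h => ?_⟩
    exact bot_ne_top (α := Submodule k (⨂[k] _ : ι, V))
      (congrArg Subrepresentation.toSubmodule h)
  refine ⟨fun W => or_iff_not_imp_left.2 fun hW => ?_⟩
  have hW' : W.toSubmodule ≠ ⊥ := fun h => hW (Subrepresentation.toSubmodule_injective h)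
  obtain ⟨w, hwW, hw⟩ := W.toSubmodule.exists_mem_ne_zero_of_ne_bot hW'
  have hstable : ∀ φ : ι → Module.End k V, PiTensorProduct.map φ w ∈ W.toSubmodule := by
    intro φ
    let m : MultilinearMap k (fun _ : ι => Module.End k V) (_ ⧸ W.toSubmodule) :=
      (W.toSubmodule.mkQ ∘ₗ LinearMap.applyₗ w).compMultilinearMap
        (PiTensorProduct.mapMultilinear k (fun _ : ι => V) fun _ : ι => V)
    have hm : m = 0 := by
      refine MultilinearMap.ext_of_span_eq_top (g := fun _ => ρ)
        (fun _ => IsIrreducible.span_range_eq_top ρ) fun f => ?_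
      obtain ⟨h, hh⟩ := hσ f
      have := W.apply_mem_toSubmodule h hwW
      rw [hh] at this
      simpa [m] using this
    have := congrArg (fun m => m φ) hm
    simpa [m] using this
  obtain ⟨j, hj⟩ : ∃ j, B.repr w j ≠ 0 := by
    by_contra! h
    exact hw (B.repr.map_eq_zero_iff.1 (Finsupp.ext h))
  refine Subrepresentation.toSubmodule_injective (eq_top_iff.2 ?_)
  change ⊤ ≤ W.toSubmodule
  rw [← PiTensorProduct.span_tprod_eq_top, Submodule.span_le]
  rintro _ ⟨v, rfl⟩
  have hproj : PiTensorProduct.map (fun i => (b.coord (j i)).smulRight (v i)) =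
      (B.coord j).smulRight (PiTensorProduct.tprod k v) := by
    ext x
    simp [B, MultilinearMap.map_smul_univ]
  have := hstable fun i => (b.coord (j i)).smulRight (v i)
  rw [hproj] at this
  exact (W.toSubmodule.smul_mem_iff hj).1 this

end Representation

/-- The product homomorphism from a finite power of a commutative group. -/
def piProdHom (ι Z : Type*) [Fintype ι] [CommGroup Z] : (ι → Z) →* Z where
  toFun f := ∏ i, f i
  map_one' := Finset.prod_const_one
  map_mul' _ _ := Finset.prod_mul_distrib

theorem card_ker_piProdHom (Z : Type*) [CommGroup Z] [Finite Z] {n : ℕ} (hn : 0 < n) :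
    Nat.card (piProdHom (Fin n) Z).ker = Nat.card Z ^ (n - 1) := by
  have hsurj : Function.Surjective (piProdHom (Fin n) Z) := fun z =>
    ⟨Pi.mulSingle ⟨0, hn⟩ z, Fintype.prod_pi_mulSingle' (⟨0, hn⟩ : Fin n) z⟩
  have h := (piProdHom (Fin n) Z).ker.card_mul_index
  rw [Subgroup.index_ker, MonoidHom.range_eq_top.2 hsurj, Subgroup.card_top, Nat.card_fun,
    Nat.card_fin, ← pow_sub_one_mul hn.ne'] at h
  exact Nat.eq_of_mul_eq_mul_right Nat.card_pos h

section CentralProdOne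

open scoped IsMulCommutative

/-- The tuples of central elements with product one, as a subgroup of a power of a group. -/
def centralProdOne (G : Type*) [Group G] (n : ℕ) : Subgroup (Fin n → G) :=
  (piProdHom (Fin n) (Subgroup.center G)).ker.map ((Subgroup.center G).subtype.compLeft (Fin n))

theorem coe_centralProdOne (G : Type*) [Group G] (n : ℕ) :
    (centralProdOne G n : Set (Fin n → G)) =
      {f | (∀ i, f i ∈ Subgroup.center G) ∧ (List.ofFn f).prod = 1} := by
  have key : ∀ f : Fin n → Subgroup.center G,
      (List.ofFn fun i => (f i : G)).prod = (piProdHom (Fin n) (Subgroup.center G) f : G) := by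
    intro f
    change _ = (Subgroup.center G).subtype (∏ i, f i)
    rw [← List.prod_ofFn, map_list_prod, List.map_ofFn]
    rfl
  ext f
  constructor
  · rintro ⟨z, hz, rfl⟩
    refine ⟨fun i => (z i).2, (key z).trans ?_⟩
    rw [MonoidHom.mem_ker.1 hz, Subgroup.coe_one]
  · rintro ⟨hf, hprod⟩
    exact ⟨fun i => ⟨f i, hf i⟩, Subtype.ext ((key fun i => ⟨f i, hf i⟩).symm.trans hprod), rfl⟩

theorem mem_centralProdOne {G : Type*} [Group G] {n : ℕ} {f : Fin n → G} :
    f ∈ centralProdOne G n ↔ (∀ i, f i ∈ Subgroup.center G) ∧ (List.ofFn f).prod = 1 :=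
  Set.ext_iff.1 (coe_centralProdOne G n) f

instance normal_centralProdOne (G : Type*) [Group G] (n : ℕ) : (centralProdOne G n).Normal where
  conj_mem f hf g := by
    convert hf
    ext i
    have := Subgroup.mem_center_iff.1 ((mem_centralProdOne.1 hf).1 i) (g i)
    simp [this]

theorem card_centralProdOne (G : Type*) [Group G] [Finite G] {n : ℕ} (hn : 0 < n) :
    Nat.card (centralProdOne G n) = Nat.card (Subgroup.center G) ^ (n - 1) := by
  rw [← card_ker_piProdHom _ hn]
  exact Subgroup.card_map_of_injective fun f g h =>
    funext fun i => Subtype.ext (congrFun h i)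

end CentralProdOne

/-- Tuples of central elements with product one act trivially on tensor powers of an irreducible
representation. -/
theorem Representation.IsIrreducible.piTensorProduct_map_eq_one {k G V : Type*} [Field k]
    [IsAlgClosed k] [Group G] [AddCommGroup V] [Module k V] [FiniteDimensional k V]
    (ρ : Representation k G V) [ρ.IsIrreducible] {n : ℕ} {f : Fin n → G}
    (hf : f ∈ centralProdOne G n) : PiTensorProduct.map (fun i => ρ (f i)) = 1 := by
  obtain ⟨hcen, hprod⟩ := mem_centralProdOne.1 hf
  have : Nontrivial V := IsSimpleModule.nontrivial (MonoidAlgebra k G) ρ.asModule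
  have hscalar : ∀ i, ∃ c : k, ρ (f i) = c • 1 := fun i =>
    exists_eq_smul_one_of_commute ρ (ρ (f i)) fun g => by
      rw [Commute, SemiconjBy, ← map_mul, ← map_mul, Subgroup.mem_center_iff.1 (hcen i) g]
  choose c hc using hscalar
  have hc1 : ∏ i, c i = 1 := by
    apply FaithfulSMul.algebraMap_injective k (Module.End k V)
    rw [← List.prod_ofFn, map_list_prod, List.map_ofFn, map_one, ← map_one ρ, ← hprod,
      map_list_prod, List.map_ofFn]
    congr 2
    ext1 i
    simp [hc, Algebra.algebraMap_eq_smul_one]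
  ext v
  simp [hc, MultilinearMap.map_smul_univ, hc1]

/-- Let `V` be a faithful irreducible complex representation of a finite group `G` and
`N_n = {(z₁,…,zₙ) ∈ Z(G)^n : z₁⋯zₙ = 1}`. Then `V^{⊗n}` descends to an irreducible
representation of `G^n / N_n`, and hence `(dim V)^n ∣ |G|^n / |Z(G)|^{n-1}`. -/
theorem stmt_11 (G V : Type*) [Group G] [Fintype G]
    [AddCommGroup V] [Module ℂ V] [FiniteDimensional ℂ V]
    (ρ : Representation ℂ G V)
    (hfaith : Function.Injective ρ)
    (hirr : IsSimpleModule (MonoidAlgebra ℂ G) ρ.asModule)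
    (n : ℕ) (hn : 0 < n) :
    ∃ N : Subgroup (Fin n → G),
      (N : Set (Fin n → G)) =
          {f | (∀ i, f i ∈ Subgroup.center G) ∧ (List.ofFn f).prod = 1} ∧
      ∃ _hN : N.Normal,
        (∃ σ : Representation ℂ ((Fin n → G) ⧸ N) (⨂[ℂ] _ : Fin n, V),
          (∀ f : Fin n → G,
            σ (QuotientGroup.mk f) = PiTensorProduct.map (fun i => ρ (f i))) ∧
          IsSimpleModule (MonoidAlgebra ℂ ((Fin n → G) ⧸ N)) σ.asModule) ∧
        (Module.finrank ℂ V) ^ n ∣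
          Fintype.card G ^ n / Nat.card (Subgroup.center G) ^ (n - 1) := by
  have : ρ.IsIrreducible := ρ.irreducible_iff_isSimpleModule_asModule.2 hirr
  let σ : Representation ℂ ((Fin n → G) ⧸ centralProdOne G n) (⨂[ℂ] _ : Fin n, V) :=
    QuotientGroup.lift (centralProdOne G n)
      (PiTensorProduct.mapMonoidHom.comp (ρ.compLeft (Fin n))) fun _ hf =>
        Representation.IsIrreducible.piTensorProduct_map_eq_one ρ hf
  have hσ : ∀ f : Fin n → G,
      σ (QuotientGroup.mk f) = PiTensorProduct.map (fun i => ρ (f i)) := fun _ => rfl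
  have hσirr : σ.IsIrreducible :=
    Representation.isIrreducible_piTensorProduct ρ σ fun f => ⟨_, hσ f⟩
  refine ⟨centralProdOne G n, coe_centralProdOne G n, inferInstance,
    ⟨σ, hσ, σ.irreducible_iff_isSimpleModule_asModule.1 hσirr⟩, ?_⟩
  let B := Basis.piTensorProduct fun _ : Fin n => Module.finBasis ℂ V
  have : FiniteDimensional ℂ (⨂[ℂ] _ : Fin n, V) := B.finiteDimensional_of_finite
  have hdvd := Representation.IsIrreducible.finrank_dvd_card σ
  have hcard : Nat.card ((Fin n → G) ⧸ centralProdOne G n) =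
      Fintype.card G ^ n / Nat.card (Subgroup.center G) ^ (n - 1) := by
    have h := (centralProdOne G n).card_eq_card_quotient_mul_card_subgroup
    rw [card_centralProdOne G hn, Nat.card_fun, Nat.card_fin, Nat.card_eq_fintype_card] at h
    rw [h, Nat.mul_div_cancel _ (pow_pos Nat.card_pos _)]
  rw [hcard, Module.finrank_eq_card_basis B] at hdvd
  simpa using hdvd
end

section
/- Let H be a finite-dimensional Hopf algebra over a field k, and K a Hopf subalgebra of H. Then dim_k K divides dim_k H. -/
open TensorProduct

/-- A subalgebra of a Hopf algebra which is closed under comultiplication and the antipode,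
i.e. a Hopf subalgebra. -/
def IsHopfSubalgebra (k : Type*) {H : Type*} [CommRing k] [Ring H] [HopfAlgebra k H]
    (K : Subalgebra k H) : Prop :=
  (∀ x ∈ K, Coalgebra.comul (R := k) x ∈
      LinearMap.range (TensorProduct.map K.toSubmodule.subtype K.toSubmodule.subtype)) ∧
    ∀ x ∈ K, HopfAlgebra.antipode (R := k) x ∈ K

section ModuleTheory

variable {k A : Type*} [Field k] [Ring A] [Algebra k A]

theorem finiteDimensional_linearMap (M T : Type*) [AddCommGroup M] [Module k M] [Module A M]
    [IsScalarTower k A M] [FiniteDimensional k M] [AddCommGroup T] [Module k T] [Module A T]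
    [IsScalarTower k A T] [FiniteDimensional k T] : FiniteDimensional k (M →ₗ[A] T) :=
  Module.Finite.of_injective (LinearMap.restrictScalarsₗ k A M T k)
    (LinearMap.restrictScalars_injective k)

theorem finiteDimensional_submodule {M : Type*} [AddCommGroup M] [Module k M] [Module A M]
    [IsScalarTower k A M] [FiniteDimensional k M] (N : Submodule A M) : FiniteDimensional k N :=
  inferInstanceAs (FiniteDimensional k (N.restrictScalars k))

theorem finrank_linearMap_prod (M N T : Type*) [AddCommGroup M] [Module k M] [Module A M]
    [IsScalarTower k A M] [FiniteDimensional k M] [AddCommGroup N] [Module k N] [Module A N]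
    [IsScalarTower k A N] [FiniteDimensional k N] [AddCommGroup T] [Module k T] [Module A T]
    [IsScalarTower k A T] [FiniteDimensional k T] :
    Module.finrank k (M × N →ₗ[A] T) =
      Module.finrank k (M →ₗ[A] T) + Module.finrank k (N →ₗ[A] T) := by
  have := finiteDimensional_linearMap (k := k) (A := A) M T
  have := finiteDimensional_linearMap (k := k) (A := A) N T
  rw [← (LinearMap.coprodEquiv (R := A) (M := M) (M₂ := N) (M₃ := T) k).finrank_eq,
    Module.finrank_prod]

theorem finrank_linearMap_congr {M N : Type*} (T : Type*) [AddCommGroup M] [Module A M]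
    [AddCommGroup N] [Module A N] [AddCommGroup T] [Module k T] [Module A T]
    [IsScalarTower k A T] (e : M ≃ₗ[A] N) :
    Module.finrank k (M →ₗ[A] T) = Module.finrank k (N →ₗ[A] T) :=
  (LinearEquiv.congrLeft T k e).finrank_eq

theorem finrank_linearMap_pi (ι : Type*) [Fintype ι] (M T : Type*) [AddCommGroup M] [Module A M]
    [AddCommGroup T] [Module k T] [Module A T] [IsScalarTower k A T]
    [Module.Finite k (M →ₗ[A] T)] :
    Module.finrank k ((ι → M) →ₗ[A] T) = Fintype.card ι * Module.finrank k (M →ₗ[A] T) := by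
  classical
  rw [← LinearEquiv.finrank_eq (LinearMap.lsum A (fun _ : ι => M) k (M := T))]
  simp [Module.finrank_pi_fintype]

/-- A hom-dimension criterion for the existence of a surjection between semisimple modules. -/
theorem exists_surjective_of_isSemisimpleModule [FiniteDimensional k A] (n : ℕ) :
    ∀ (M N : Type*) [AddCommGroup M] [Module k M] [Module A M]
    [IsScalarTower k A M] [FiniteDimensional k M] [AddCommGroup N] [Module k N] [Module A N]
    [IsScalarTower k A N] [FiniteDimensional k N] [IsSemisimpleModule A M]
    [IsSemisimpleModule A N], Module.finrank k M = n →
    (∀ m : Ideal A, m.IsMaximal →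
      Module.finrank k (M →ₗ[A] A ⧸ m) ≤ Module.finrank k (N →ₗ[A] A ⧸ m)) →
    ∃ f : N →ₗ[A] M, Function.Surjective f := by
  induction n using Nat.strong_induction_on with
  | _ n ih =>
  intro M N _ _ _ _ _ _ _ _ _ _ _ _ hn h
  by_cases hM : Subsingleton M
  · exact ⟨0, fun x => ⟨0, Subsingleton.elim _ _⟩⟩
  rw [not_subsingleton_iff_nontrivial] at hM
  obtain ⟨P, hP⟩ := IsSemisimpleModule.exists_simple_submodule A M
  obtain ⟨m, hm, ⟨e⟩⟩ := isSimpleModule_iff_quot_maximal.mp hP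
  obtain ⟨M', hM'⟩ := exists_isCompl P
  have : FiniteDimensional k M' := finiteDimensional_submodule M'
  have hsimp : IsSimpleModule A (A ⧸ m) := IsSimpleModule.congr e.symm
  have eM : ((A ⧸ m) × M') ≃ₗ[A] M :=
    (LinearEquiv.prodCongr e.symm (LinearEquiv.refl A M')).trans
      (Submodule.prodEquivOfIsCompl P M' hM')
  have hdim (T : Ideal A) : Module.finrank k (M →ₗ[A] A ⧸ T) =
      Module.finrank k ((A ⧸ m) →ₗ[A] A ⧸ T) + Module.finrank k (M' →ₗ[A] A ⧸ T) := by
    rw [← finrank_linearMap_congr _ eM, finrank_linearMap_prod]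
  have hid : 0 < Module.finrank k ((A ⧸ m) →ₗ[A] A ⧸ m) := by
    have := finiteDimensional_linearMap (k := k) (A := A) (A ⧸ m) (A ⧸ m)
    have : Nontrivial (A ⧸ m) := IsSimpleModule.nontrivial A _
    exact Module.finrank_pos_iff_exists_ne_zero.mpr ⟨LinearMap.id, fun h0 => by
      obtain ⟨x, hx⟩ := exists_ne (0 : A ⧸ m)
      exact hx (LinearMap.congr_fun h0 x)⟩
  have hN := h m hm
  rw [hdim] at hN
  obtain ⟨g, hg⟩ : ∃ g : N →ₗ[A] A ⧸ m, g ≠ 0 := by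
    by_contra! hall
    have : Subsingleton (N →ₗ[A] A ⧸ m) := ⟨fun a b => by rw [hall a, hall b]⟩
    have := Module.finrank_zero_of_subsingleton (R := k) (M := N →ₗ[A] A ⧸ m)
    omega
  have : FiniteDimensional k (LinearMap.ker g) := finiteDimensional_submodule _
  have hgs : Function.Surjective g := LinearMap.surjective_of_ne_zero hg
  obtain ⟨Q, hQ⟩ := exists_isCompl (LinearMap.ker g)
  have eQ : Q ≃ₗ[A] A ⧸ m :=
    (Submodule.quotientEquivOfIsCompl _ _ hQ).symm.trans (g.quotKerEquivOfSurjective hgs)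
  have eN : ((A ⧸ m) × LinearMap.ker g) ≃ₗ[A] N :=
    (LinearEquiv.prodCongr eQ.symm (LinearEquiv.refl A _)).trans
      (Submodule.prodEquivOfIsCompl Q _ hQ.symm)
  have hdimN (T : Ideal A) : Module.finrank k (N →ₗ[A] A ⧸ T) =
      Module.finrank k ((A ⧸ m) →ₗ[A] A ⧸ T) +
        Module.finrank k (LinearMap.ker g →ₗ[A] A ⧸ T) := by
    rw [← finrank_linearMap_congr _ eN, finrank_linearMap_prod]
  have hlt : Module.finrank k M' < n := by
    rw [← hn, ← (eM.restrictScalars k).finrank_eq, Module.finrank_prod]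
    have : Nontrivial (A ⧸ m) := IsSimpleModule.nontrivial A _
    have : 0 < Module.finrank k (A ⧸ m) := Module.finrank_pos
    omega
  obtain ⟨f, hf⟩ := ih _ hlt M' (LinearMap.ker g) rfl (fun T hT => by
    have := h T hT
    rw [hdim, hdimN] at this
    omega)
  refine ⟨eM.toLinearMap ∘ₗ (LinearMap.id.prodMap f) ∘ₗ eN.symm.toLinearMap, ?_⟩
  simp only [LinearMap.coe_comp, LinearEquiv.coe_coe]
  exact eM.surjective.comp ((Function.Surjective.prodMap Function.surjective_id hf).comp
    eN.symm.surjective)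

variable (k) in
theorem isSemisimpleModule_quotient_jacobson (M : Type*) [AddCommGroup M] [Module k M]
    [Module A M] [IsScalarTower k A M] [FiniteDimensional k M] :
    IsSemisimpleModule A (M ⧸ Module.jacobson A M) := by
  have : IsArtinian A (M ⧸ Module.jacobson A M) := isArtinian_of_tower k inferInstance
  rw [IsArtinian.isSemisimpleModule_iff_jacobson]
  exact Module.jacobson_quotient_jacobson A M

theorem finrank_linearMap_quotient_jacobson (M : Type*) [AddCommGroup M]
    [Module A M] (m : Ideal A) (hm : m.IsMaximal) :
    Module.finrank k ((M ⧸ Module.jacobson A M) →ₗ[A] A ⧸ m) =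
      Module.finrank k (M →ₗ[A] A ⧸ m) := by
  have hsimp : IsSimpleModule A (A ⧸ m) :=
    isSimpleModule_iff_quot_maximal.mpr ⟨m, hm, ⟨LinearEquiv.refl A _⟩⟩
  refine LinearEquiv.finrank_eq (LinearEquiv.ofBijective
    (LinearMap.lcomp k (A ⧸ m) (Module.jacobson A M).mkQ) ⟨fun f g hfg => ?_, fun f => ?_⟩)
  · exact Submodule.linearMap_qext _ hfg
  · have hker : Module.jacobson A M ≤ LinearMap.ker f := by
      refine (Module.le_comap_jacobson f).trans ?_
      rw [IsSimpleModule.jacobson_eq_bot]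
      exact le_rfl
    exact ⟨(Module.jacobson A M).liftQ f hker, Submodule.liftQ_mkQ _ _ hker⟩

/-- A hom-dimension criterion for a module to be a quotient of a projective module. -/
theorem exists_surjective_of_projective [FiniteDimensional k A] (M P : Type*) [AddCommGroup M]
    [Module k M] [Module A M] [IsScalarTower k A M] [FiniteDimensional k M] [AddCommGroup P]
    [Module k P] [Module A P] [IsScalarTower k A P] [FiniteDimensional k P] [Module.Projective A P]
    (h : ∀ m : Ideal A, m.IsMaximal →
      Module.finrank k (M →ₗ[A] A ⧸ m) ≤ Module.finrank k (P →ₗ[A] A ⧸ m)) :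
    ∃ f : P →ₗ[A] M, Function.Surjective f := by
  have := isSemisimpleModule_quotient_jacobson k (A := A) M
  have := isSemisimpleModule_quotient_jacobson k (A := A) P
  obtain ⟨g, hg⟩ := exists_surjective_of_isSemisimpleModule (k := k) (A := A) _
    (M ⧸ Module.jacobson A M) (P ⧸ Module.jacobson A P) rfl (fun m hm => by
      rw [finrank_linearMap_quotient_jacobson M m hm, finrank_linearMap_quotient_jacobson P m hm]
      exact h m hm)
  obtain ⟨f, hf⟩ := Module.projective_lifting_property (Module.jacobson A M).mkQ
    (g ∘ₗ (Module.jacobson A P).mkQ) (Submodule.mkQ_surjective _)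
  refine ⟨f, LinearMap.range_eq_top.mp ?_⟩
  have : IsNoetherian A M := isNoetherian_of_tower k inferInstance
  by_contra hne
  obtain ⟨N, hN, hle⟩ := (eq_top_or_exists_le_coatom (LinearMap.range f)).resolve_left hne
  have hJ : Module.jacobson A M ≤ N := sInf_le hN
  refine hN.1 (eq_top_iff.mpr fun x _ => ?_)
  obtain ⟨y, hy⟩ := (hg.comp (Submodule.mkQ_surjective (Module.jacobson A P)))
    (Submodule.Quotient.mk x)
  have hy' : Submodule.Quotient.mk (p := Module.jacobson A M) (f y) = Submodule.Quotient.mk x :=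
    (LinearMap.congr_fun hf y).trans hy
  rw [Submodule.Quotient.eq] at hy'
  have := N.sub_mem (hle ⟨y, rfl⟩) (hJ hy')
  simpa using this

/-- Every module is, up to powers, a quotient of a free module of the rank dictated by some simple
module. -/
theorem exists_surjective_pow [FiniteDimensional k A] [Nontrivial A] (M : Type*) [AddCommGroup M]
    [Module k M] [Module A M] [IsScalarTower k A M] [FiniteDimensional k M] :
    ∃ (m : Ideal A) (t r : ℕ) (f : (Fin t → A) →ₗ[A] (Fin r → M)), m.IsMaximal ∧ 0 < r ∧
      r * Module.finrank k (M →ₗ[A] A ⧸ m) = t * Module.finrank k (A ⧸ m) ∧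
      Function.Surjective f := by
  let a (m : Ideal A) : ℕ := Module.finrank k (M →ₗ[A] A ⧸ m)
  let b (m : Ideal A) : ℕ := Module.finrank k (A ⧸ m)
  have hb (m : Ideal A) (hm : m.IsMaximal) : 0 < b m := by
    have : Nontrivial (A ⧸ m) := Submodule.Quotient.nontrivial_iff.mpr hm.ne_top
    exact Module.finrank_pos
  have hble (m : Ideal A) : b m ≤ Module.finrank k A :=
    LinearMap.finrank_le_finrank_of_surjective (f := (Submodule.mkQ m).restrictScalars k)
      (Submodule.mkQ_surjective m)
  have hale (m : Ideal A) : a m ≤ Module.finrank k M * Module.finrank k A := by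
    calc a m ≤ Module.finrank k (M →ₗ[k] A ⧸ m) :=
          LinearMap.finrank_le_finrank_of_injective
            (f := LinearMap.restrictScalarsₗ k A M (A ⧸ m) k)
            (LinearMap.restrictScalars_injective k)
      _ = Module.finrank k M * b m := Module.finrank_linearMap k k M (A ⧸ m)
      _ ≤ _ := Nat.mul_le_mul_left _ (hble m)
  obtain ⟨m₀, hm₀⟩ := Ideal.exists_maximal A
  let s : Set (ℕ × ℕ) := Set.image (fun m => (a m, b m)) {m : Ideal A | m.IsMaximal}
  have hs : s.Finite := by
    refine ((Set.finite_Iic (Module.finrank k M * Module.finrank k A)).prod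
      (Set.finite_Iic (Module.finrank k A))).subset ?_
    rintro _ ⟨m, -, rfl⟩
    exact ⟨hale m, hble m⟩
  obtain ⟨_, ⟨m, hm, rfl⟩, hmax⟩ := Set.exists_max_image s (fun p => (p.1 / p.2 : ℚ)) hs
    ⟨_, m₀, hm₀, rfl⟩
  obtain ⟨f, hf⟩ := exists_surjective_of_projective (k := k) (A := A) (Fin (b m) → M)
    (Fin (a m) → A) (fun T hT => by
      have := finiteDimensional_linearMap (k := k) (A := A) M (A ⧸ T)
      have := finiteDimensional_linearMap (k := k) (A := A) A (A ⧸ T)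
      rw [finrank_linearMap_pi, finrank_linearMap_pi,
        (LinearMap.ringLmapEquivSelf A k (A ⧸ T)).finrank_eq, Fintype.card_fin, Fintype.card_fin]
      have h := hmax _ ⟨T, hT, rfl⟩
      have h1 : (0 : ℚ) < b T := by exact_mod_cast hb T hT
      have h2 : (0 : ℚ) < b m := by exact_mod_cast hb m hm
      rw [div_le_div_iff₀ h1 h2] at h
      have h' : a T * b m ≤ a m * b T := by exact_mod_cast h
      rwa [mul_comm] at h')
  exact ⟨m, a m, b m, f, hm, hb m hm, mul_comm _ _, hf⟩

end ModuleTheory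

section HopfModule

open Coalgebra WithConv

section Convolution

variable {k C W : Type*} [Field k] [AddCommGroup C] [Module k C] [Coalgebra k C]
  [AddCommGroup W] [Module k W]

/-- The operator `x ⊗ w ↦ ∑ x₁ ⊗ q(x₂) w` on `C ⊗ W`. -/
noncomputable def coactionTwist (q : C →ₗ[k] Module.End k W) : C ⊗[k] W →ₗ[k] C ⊗[k] W :=
  (TensorProduct.lift q).lTensor C ∘ₗ (TensorProduct.assoc k C C W).toLinearMap ∘ₗ
    (comul (R := k) (A := C)).rTensor W

theorem coactionTwist_tmul (q : C →ₗ[k] Module.End k W) {x : C} {ι : Type*} (𝓡 : Repr k x ι)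
    (w : W) : coactionTwist q (x ⊗ₜ w) = ∑ i ∈ 𝓡.index, 𝓡.left i ⊗ₜ[k] q (𝓡.right i) w := by
  simp [coactionTwist, ← 𝓡.eq, TensorProduct.sum_tmul]

theorem coactionTwist_comp (p q : C →ₗ[k] Module.End k W) :
    coactionTwist p ∘ₗ coactionTwist q = coactionTwist (toConv p * toConv q).ofConv := by
  refine TensorProduct.ext' fun x w => ?_
  rw [LinearMap.comp_apply, coactionTwist_tmul q (ℛ k x), coactionTwist_tmul _ (ℛ k x), map_sum]
  have h := congrArg ((TensorProduct.lift ((LinearMap.llcomp k W W W).compl₁₂ p q)).lTensor C)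
    (sum_tmul_tmul_eq (ℛ k x) (fun i => ℛ k _) (fun i => ℛ k _))
  have h' := congrArg ((LinearMap.applyₗ w : Module.End k W →ₗ[k] W).lTensor C) h
  simp only [map_sum, LinearMap.lTensor_tmul, TensorProduct.lift.tmul] at h'
  refine (Finset.sum_congr rfl fun i _ => ?_).trans (h'.trans (Finset.sum_congr rfl fun i _ => ?_))
  · rw [coactionTwist_tmul p (ℛ k _)]
    rfl
  · change _ = _ ⊗ₜ[k] ((toConv p * toConv q) ((ℛ k x).right i)) w
    rw [(ℛ k _).convMul_apply, LinearMap.sum_apply, TensorProduct.tmul_sum]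
    rfl

theorem coactionTwist_one :
    coactionTwist (1 : WithConv (C →ₗ[k] Module.End k W)).ofConv = LinearMap.id := by
  refine TensorProduct.ext' fun x w => ?_
  rw [coactionTwist_tmul _ (ℛ k x)]
  have h := congrArg ((LinearMap.toSpanSingleton k W w).lTensor C) (sum_tmul_counit_eq (ℛ k x))
  simp only [map_sum, LinearMap.lTensor_tmul, LinearMap.toSpanSingleton_apply, one_smul] at h
  simpa [Algebra.algebraMap_eq_smul_one] using h

end Convolution

section Hopf

variable {k B W : Type*} [Field k] [Ring B] [HopfAlgebra k B] [AddCommGroup W] [Module k W]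

open HopfAlgebra

theorem algHom_convMul_antipode {E : Type*} [Ring E] [Algebra k E] (τ : B →ₐ[k] E) :
    toConv τ.toLinearMap * toConv (τ.toLinearMap ∘ₗ antipode k) = 1 := by
  ext x
  rw [(ℛ k x).convMul_apply]
  simpa using congrArg τ (sum_mul_antipode_eq_algebraMap_counit (ℛ k x))

theorem antipode_convMul_algHom {E : Type*} [Ring E] [Algebra k E] (τ : B →ₐ[k] E) :
    toConv (τ.toLinearMap ∘ₗ antipode k) * toConv τ.toLinearMap = 1 := by
  ext x
  rw [(ℛ k x).convMul_apply]
  simpa using congrArg τ (sum_antipode_mul_eq_algebraMap_counit (ℛ k x))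

/-- The automorphism `x ⊗ w ↦ ∑ x₁ ⊗ x₂ w` of `B ⊗ W`, with inverse
`x ⊗ w ↦ ∑ x₁ ⊗ S(x₂) w`. -/
noncomputable def twistEquiv (τ : B →ₐ[k] Module.End k W) : B ⊗[k] W ≃ₗ[k] B ⊗[k] W :=
  LinearEquiv.ofLinearMap (coactionTwist τ.toLinearMap)
    (coactionTwist (τ.toLinearMap ∘ₗ antipode k))
    (by rw [coactionTwist_comp, algHom_convMul_antipode, coactionTwist_one])
    (by rw [coactionTwist_comp, antipode_convMul_algHom, coactionTwist_one])

theorem twistEquiv_tmul (τ : B →ₐ[k] Module.End k W) {x : B} {ι : Type*} (𝓡 : Repr k x ι)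
    (w : W) : twistEquiv τ (x ⊗ₜ w) = ∑ i ∈ 𝓡.index, 𝓡.left i ⊗ₜ[k] τ (𝓡.right i) w :=
  coactionTwist_tmul _ 𝓡 w

theorem twistEquiv_symm_tmul (τ : B →ₐ[k] Module.End k W) {x : B} {ι : Type*} (𝓡 : Repr k x ι)
    (w : W) : (twistEquiv τ).symm (x ⊗ₜ w) =
      ∑ i ∈ 𝓡.index, 𝓡.left i ⊗ₜ[k] τ (antipode k (𝓡.right i)) w :=
  coactionTwist_tmul _ 𝓡 w

/-- The diagonal action of a bialgebra on a tensor product of two representations. -/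
noncomputable def diagonalAction {X : Type*} [AddCommGroup X] [Module k X]
    (σ : B →ₐ[k] Module.End k X) (τ : B →ₐ[k] Module.End k W) :
    B →ₐ[k] Module.End k (X ⊗[k] W) :=
  (Module.endTensorEndAlgHom (S := k) (A := k)).comp ((Algebra.TensorProduct.map σ τ).comp
    (Bialgebra.comulAlgHom k B))

theorem diagonalAction_apply_tmul {X : Type*} [AddCommGroup X] [Module k X]
    (σ : B →ₐ[k] Module.End k X) (τ : B →ₐ[k] Module.End k W) {b : B} {ι : Type*}
    (𝓡 : Repr k b ι) (x : X) (w : W) :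
    diagonalAction σ τ b (x ⊗ₜ w) =
      ∑ i ∈ 𝓡.index, σ (𝓡.left i) x ⊗ₜ[k] τ (𝓡.right i) w := by
  simp [diagonalAction, ← 𝓡.eq, Module.endTensorEndAlgHom_apply]

theorem twistEquiv_tmul_eq_diagonalAction (τ : B →ₐ[k] Module.End k W) (x : B) (w : W) :
    twistEquiv τ (x ⊗ₜ w) = diagonalAction (Algebra.lmul k B) τ x (1 ⊗ₜ w) := by
  rw [twistEquiv_tmul τ (ℛ k x), diagonalAction_apply_tmul _ _ (ℛ k x)]
  simp

theorem twistEquiv_smul (τ : B →ₐ[k] Module.End k W) (b : B) (u : B ⊗[k] W) :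
    twistEquiv τ (b • u) = diagonalAction (Algebra.lmul k B) τ b (twistEquiv τ u) := by
  induction u with
  | zero => simp
  | add u v hu hv => rw [smul_add, map_add, hu, hv, map_add, map_add]
  | tmul x w =>
    rw [TensorProduct.smul_tmul', smul_eq_mul, twistEquiv_tmul_eq_diagonalAction,
      twistEquiv_tmul_eq_diagonalAction, map_mul, Module.End.mul_apply]

theorem twistEquiv_symm_diagonalAction (τ : B →ₐ[k] Module.End k W) (b : B) (u : B ⊗[k] W) :
    (twistEquiv τ).symm (diagonalAction (Algebra.lmul k B) τ b u) = b • (twistEquiv τ).symm u := by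
  rw [LinearEquiv.symm_apply_eq, twistEquiv_smul, LinearEquiv.apply_symm_apply]

variable (k B) in
/-- The contragredient of the left regular representation. -/
noncomputable def dualRegular : B →ₐ[k] Module.End k (Module.Dual k B) :=
  AlgHom.ofLinearMap
    (Module.Dual.transpose (R := k) ∘ₗ (Algebra.lmul k B).toLinearMap ∘ₗ antipode k)
    (by ext; simp [Module.Dual.transpose_apply])
    (fun x y => by ext; simp [antipode_mul_antidistrib, Module.Dual.transpose_apply, mul_assoc])

theorem dualRegular_apply (b x : B) (φ : Module.Dual k B) :
    dualRegular k B b φ x = φ (antipode k b * x) := rfl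

variable (k B) in
/-- The identification of `B ⊗ B*` with the space of linear endomorphisms of `B`. -/
noncomputable def tensorDualEquiv [FiniteDimensional k B] :
    B ⊗[k] Module.Dual k B ≃ₗ[k] (B →ₗ[k] B) :=
  (TensorProduct.comm k _ _).trans (dualTensorHomEquiv k B B)

theorem tensorDualEquiv_tmul [FiniteDimensional k B] (x y : B) (φ : Module.Dual k B) :
    tensorDualEquiv k B (x ⊗ₜ φ) y = φ y • x := rfl

variable (k B) in
/-- A finite-dimensional Hopf algebra has a nonzero left integral. -/
theorem exists_left_integral [FiniteDimensional k B] :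
    ∃ Λ : B, Λ ≠ 0 ∧ ∀ b : B, b * Λ = counit (R := k) b • Λ := by
  have : Nontrivial B := Bialgebra.nontrivial (R := k)
  let D := tensorDualEquiv k B
  let c := D.symm LinearMap.id
  have hact (b : B) : diagonalAction (Algebra.lmul k B) (dualRegular k B) b c =
      counit (R := k) b • c := by
    have key (u : B ⊗[k] Module.Dual k B) (y : B) :
        D (diagonalAction (Algebra.lmul k B) (dualRegular k B) b u) y =
          ∑ i ∈ (ℛ k b).index, (ℛ k b).left i * D u (antipode k ((ℛ k b).right i) * y) := by
      induction u with
      | zero => simp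
      | add u v hu hv => simp [hu, hv, mul_add, Finset.sum_add_distrib]
      | tmul x φ =>
        rw [diagonalAction_apply_tmul _ _ (ℛ k b), map_sum, LinearMap.sum_apply]
        refine Finset.sum_congr rfl fun i _ => ?_
        rw [tensorDualEquiv_tmul, tensorDualEquiv_tmul, dualRegular_apply, mul_smul_comm]
        rfl
    refine D.injective (LinearMap.ext fun y => ?_)
    rw [key, map_smul, LinearEquiv.apply_symm_apply]
    simp only [LinearMap.id_apply, ← mul_assoc, LinearMap.smul_apply]
    rw [← Finset.sum_mul, sum_mul_antipode_eq_smul, smul_mul_assoc, one_mul]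
  have hc : c ≠ 0 := by
    intro h
    obtain ⟨x, hx⟩ := exists_ne (0 : B)
    have := D.apply_symm_apply LinearMap.id
    rw [show D.symm LinearMap.id = 0 from h, map_zero] at this
    exact hx (LinearMap.congr_fun this x).symm
  let z := (twistEquiv (dualRegular k B)).symm c
  have hz : z ≠ 0 := by simpa [z] using hc
  have hbz (b : B) : b • z = counit (R := k) b • z := by
    rw [← twistEquiv_symm_diagonalAction, hact, map_smul]
  let ev (y : Module.Dual k (Module.Dual k B)) : B ⊗[k] Module.Dual k B →ₗ[B] B :=
    (TensorProduct.AlgebraTensorModule.rid k B B).toLinearMap ∘ₗ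
      TensorProduct.AlgebraTensorModule.lTensor B B y
  obtain ⟨y, hy⟩ : ∃ y, ev y z ≠ 0 := by
    by_contra! hall
    apply hz
    let e := Module.finBasis k (Module.Dual k B)
    refine (TensorProduct.equivFinsuppOfBasisRight e).injective (Finsupp.ext fun i => ?_)
    rw [map_zero, TensorProduct.equivFinsuppOfBasisRight_apply]
    exact hall (e.coord i)
  exact ⟨ev y z, hy, fun b => by
    rw [← smul_eq_mul, ← map_smul, hbz]; exact LinearMap.map_smul_of_tower _ _ _⟩

variable (k B) in
/-- The antipode of a finite-dimensional Hopf algebra is injective. -/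
theorem antipode_injective [FiniteDimensional k B] : Function.Injective (antipode k (A := B)) := by
  obtain ⟨Λ, hΛ, hΛmul⟩ := exists_left_integral k B
  rw [LinearMap.injective_iff_surjective, ← LinearMap.range_eq_top]
  by_contra hne
  obtain ⟨φ, hφ, hker⟩ := Submodule.exists_le_ker_of_lt_top _ (lt_top_iff_ne_top.mpr hne)
  have hφS (x : B) : φ (antipode k x) = 0 := hker ⟨x, rfl⟩
  have hshift (a : B) : (twistEquiv (Algebra.lmul k B)).symm (Λ ⊗ₜ a) =
      a • (twistEquiv (Algebra.lmul k B)).symm (Λ ⊗ₜ 1) := by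
    rw [← twistEquiv_symm_diagonalAction, diagonalAction_apply_tmul _ _ (ℛ k a)]
    congr 1
    simp only [Algebra.coe_lmul_eq_mul, LinearMap.mul_apply', hΛmul, mul_one,
      TensorProduct.smul_tmul]
    rw [← TensorProduct.tmul_sum, sum_counit_smul]
  have hzero (a : B) : ∑ i ∈ (ℛ k Λ).index,
      φ (antipode k ((ℛ k Λ).right i) * a) • (ℛ k Λ).left i = 0 := by
    have h := congrArg ((TensorProduct.AlgebraTensorModule.rid k B B).toLinearMap ∘ₗ
      TensorProduct.AlgebraTensorModule.lTensor B B φ) (hshift a)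
    rw [map_smul, twistEquiv_symm_tmul _ (ℛ k Λ), twistEquiv_symm_tmul _ (ℛ k Λ)] at h
    simpa [hφS] using h
  refine hφ ?_
  have hz : Λ ⊗ₜ[k] φ = 0 := by
    refine (twistEquiv (dualRegular k B)).injective
      ((tensorDualEquiv k B).injective (LinearMap.ext fun a => ?_))
    rw [twistEquiv_tmul _ (ℛ k Λ), map_sum, LinearMap.sum_apply, map_zero, map_zero]
    exact hzero a
  refine LinearMap.ext fun a => ?_
  have h := LinearMap.congr_fun (congrArg (tensorDualEquiv k B) hz) a
  rw [tensorDualEquiv_tmul, map_zero] at h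
  exact (smul_eq_zero.mp h).resolve_right hΛ

/-- If all contractions `∑ ω(x₂) x₁` of the coproduct of `x` lie in a proper right ideal, then `x`
vanishes. -/
theorem eq_zero_of_contract_comul_mem [FiniteDimensional k B] (I : Submodule k B)
    (hmul : ∀ y ∈ I, ∀ b, y * b ∈ I) (hone : (1 : B) ∉ I) {x : B} {ι : Type*} (𝓡 : Repr k x ι)
    (h : ∀ ω : Module.Dual k B, ∑ i ∈ 𝓡.index, ω (𝓡.right i) • 𝓡.left i ∈ I) : x = 0 := by
  let e := Module.finBasis k B
  have hconv (T : B →ₗ[k] B) : (toConv (LinearMap.id : B →ₗ[k] B) * toConv T) x ∈ I := by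
    have hT : (toConv (LinearMap.id : B →ₗ[k] B) * toConv T) x =
        ∑ j, (∑ i ∈ 𝓡.index, e.coord j (𝓡.right i) • 𝓡.left i) * T (e j) := by
      rw [𝓡.convMul_apply]
      simp only [Finset.sum_mul]
      rw [Finset.sum_comm]
      refine Finset.sum_congr rfl fun i _ => ?_
      conv_lhs => rw [← e.sum_repr (𝓡.right i)]
      simp only [map_sum, map_smul, Finset.mul_sum, mul_smul_comm, smul_mul_assoc,
        LinearMap.id_apply, Module.Basis.coord_apply]
    rw [hT]
    exact Submodule.sum_mem _ fun j _ => hmul _ (h _) _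
  refine (Module.forall_dual_apply_eq_zero_iff k x).mp fun ω => ?_
  by_contra hω
  have key := hconv (toConv (antipode k) * toConv (Algebra.linearMap k B ∘ₗ ω)).ofConv
  rw [toConv_ofConv, ← mul_assoc, LinearMap.id_mul_antipode, one_mul] at key
  change algebraMap k B (ω x) ∈ I at key
  rw [Algebra.algebraMap_eq_smul_one] at key
  exact hone ((I.smul_mem_iff hω).mp key)

/-- The tensor product of two `B`-modules, with the diagonal action of `B`. -/
def DiagTensor (k _B X W : Type*) [Field k] [AddCommGroup X] [Module k X] [AddCommGroup W]
    [Module k W] : Type _ := X ⊗[k] W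

namespace DiagTensor

variable (k B)
variable (X Y : Type*) [AddCommGroup X] [Module k X] [Module B X] [IsScalarTower k B X]
  [AddCommGroup Y] [Module k Y] [Module B Y] [IsScalarTower k B Y] [Module B W]
  [IsScalarTower k B W]

noncomputable instance : AddCommGroup (DiagTensor k B X W) :=
  inferInstanceAs (AddCommGroup (X ⊗[k] W))

noncomputable instance : Module k (DiagTensor k B X W) :=
  inferInstanceAs (Module k (X ⊗[k] W))

variable (W) in
/-- The diagonal action of `B`, as an algebra homomorphism. -/
noncomputable def action : B →ₐ[k] Module.End k (X ⊗[k] W) :=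
  diagonalAction (Algebra.lsmul k k X) (Algebra.lsmul k k W)

noncomputable instance : Module B (DiagTensor k B X W) :=
  Module.compHom (X ⊗[k] W) (action k B W X).toRingHom

variable {X Y}

/-- The identity map from the tensor product to its diagonal version. -/
noncomputable def of : X ⊗[k] W ≃ₗ[k] DiagTensor k B X W := LinearEquiv.refl k _

theorem smul_of (b : B) (u : X ⊗[k] W) : b • of k B u = of k B (action k B W X b u) := rfl

theorem action_tmul {b : B} {ι : Type*} (𝓡 : Repr k b ι) (x : X) (w : W) :
    action k B W X b (x ⊗ₜ w) = ∑ i ∈ 𝓡.index, (𝓡.left i • x) ⊗ₜ[k] (𝓡.right i • w) :=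
  diagonalAction_apply_tmul _ _ 𝓡 x w

instance : IsScalarTower k B (DiagTensor k B X W) where
  smul_assoc c b u := by
    obtain ⟨u, rfl⟩ := (of k B).surjective u
    rw [smul_of, smul_of, map_smul, LinearMap.smul_apply, map_smul]

instance [FiniteDimensional k X] [FiniteDimensional k W] :
    FiniteDimensional k (DiagTensor k B X W) :=
  inferInstanceAs (FiniteDimensional k (X ⊗[k] W))

/-- A `k`-linear map out of a diagonal tensor product is `B`-linear if it is so on pure tensors. -/
noncomputable def homOfTmul {T : Type*} [AddCommGroup T] [Module k T] [Module B T]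
    [IsScalarTower k B T] (f : X ⊗[k] W →ₗ[k] T)
    (hf : ∀ (b : B) (x : X) (w : W), f (action k B W X b (x ⊗ₜ w)) = b • f (x ⊗ₜ w)) :
    DiagTensor k B X W →ₗ[B] T where
  toFun u := f ((of k B).symm u)
  map_add' u v := by simp
  map_smul' b u := by
    obtain ⟨u, rfl⟩ := (of k B).surjective u
    rw [smul_of, LinearEquiv.symm_apply_apply, LinearEquiv.symm_apply_apply, RingHom.id_apply]
    induction u with
    | zero => simp
    | add u v hu hv => rw [map_add, map_add, map_add, hu, hv, smul_add]
    | tmul x w => exact hf b x w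

variable {k B} in
/-- Functoriality of the diagonal tensor product in its left argument. -/
noncomputable def map (f : X →ₗ[B] Y) : DiagTensor k B X W →ₗ[B] DiagTensor k B Y W :=
  homOfTmul k B ((of k B).toLinearMap ∘ₗ (f.restrictScalars k).rTensor W) fun b x w => by
    rw [action_tmul k B (ℛ k b)]
    simp [smul_of, action_tmul k B (ℛ k b)]

variable {k B} in
theorem map_of_tmul (f : X →ₗ[B] Y) (x : X) (w : W) :
    map f (of k B (x ⊗ₜ[k] w)) = of k B (f x ⊗ₜ w) := rfl

variable {k B} in
theorem map_surjective (f : X →ₗ[B] Y) (hf : Function.Surjective f) :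
    Function.Surjective (map (W := W) (k := k) f) :=
  LinearMap.rTensor_surjective W (g := f.restrictScalars k) hf

/-- Diagonal tensor products commute with finite powers. -/
noncomputable def piEquiv (ι : Type*) [Fintype ι] [DecidableEq ι] :
    DiagTensor k B (ι → X) W ≃ₗ[B] (ι → DiagTensor k B X W) :=
  LinearEquiv.ofBijective
    (homOfTmul k B (T := ι → DiagTensor k B X W)
      ((LinearEquiv.piCongrRight
          fun _ => (of k B : X ⊗[k] W ≃ₗ[k] DiagTensor k B X W)).toLinearMap ∘ₗ
        (TensorProduct.piLeft k W fun _ : ι => X).toLinearMap) fun b x w => by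
        ext j
        rw [action_tmul k B (ℛ k b)]
        simp [smul_of, action_tmul k B (ℛ k b)])
    (((LinearEquiv.piCongrRight
        fun _ => (of k B : X ⊗[k] W ≃ₗ[k] DiagTensor k B X W)).bijective.comp
      (TensorProduct.piLeft k W fun _ : ι => X).bijective).comp (of k B).symm.bijective)

/-- A tensor product with `B` acting on the left factor is a power of the left factor. -/
noncomputable def leftTensorEquiv [FiniteDimensional k W] :
    X ⊗[k] W ≃ₗ[B] (Fin (Module.finrank k W) → X) :=
  { (TensorProduct.congr (LinearEquiv.refl k X) (Module.finBasis k W).equivFun).trans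
      (TensorProduct.piScalarRight k k X _) with
    map_smul' := fun b u => by
      simp only [AddHom.toFun_eq_coe, LinearMap.coe_toAddHom, LinearEquiv.coe_coe,
        RingHom.id_apply]
      induction u with
      | zero => simp
      | add u v hu hv => rw [smul_add, map_add, map_add, hu, hv, smul_add]
      | tmul x w =>
        ext i
        simpa [TensorProduct.smul_tmul'] using smul_comm _ b x }

variable {k} in
/-- The restriction of `twistEquiv` for a Hopf algebra `H` along a bialgebra homomorphism into `H`
is linear for the diagonal action. -/
noncomputable def twistEquivOfHom {H : Type*} [Ring H] [HopfAlgebra k H] [Module B H]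
    [IsScalarTower k B H] [Module H W] [IsScalarTower k H W] (j : B →ₐc[k] H)
    (hH : ∀ (b : B) (x : H), b • x = j b * x) (hW : ∀ (b : B) (w : W), b • w = j b • w) :
    DiagTensor k B H W ≃ₗ[B] H ⊗[k] W :=
  LinearEquiv.ofBijective
    (homOfTmul k B (twistEquiv (Algebra.lsmul k k W : H →ₐ[k] _)).symm.toLinearMap fun b x w => by
      have h : action k B W H b (x ⊗ₜ w) =
          diagonalAction (Algebra.lmul k H) (Algebra.lsmul k k W) (j b) (x ⊗ₜ w) := by
        rw [action_tmul k B (ℛ k b), diagonalAction_apply_tmul _ _ ((ℛ k b).induced j)]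
        simp [hH, hW]
      rw [h]
      refine (twistEquiv_symm_diagonalAction _ _ _).trans ?_
      change _ = b • (twistEquiv _).symm (x ⊗ₜ w)
      generalize (twistEquiv _).symm (x ⊗ₜ[k] w) = u
      induction u with
      | zero => simp
      | add u v hu hv => rw [smul_add, smul_add, hu, hv]
      | tmul x w => rw [TensorProduct.smul_tmul', TensorProduct.smul_tmul', hH, smul_eq_mul])
    ((twistEquiv _).symm.bijective.comp (of k B).symm.bijective)

end DiagTensor

end Hopf
end HopfModule

section Freeness

open Coalgebra HopfAlgebra DiagTensor

variable {k K H : Type*} [Field k] [Ring K] [HopfAlgebra k K]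

theorem finrank_hom_diagTensor_pi {X W : Type*} (T : Type*) [AddCommGroup X] [Module k X]
    [Module K X] [IsScalarTower k K X] [FiniteDimensional k X] [AddCommGroup W] [Module k W]
    [Module K W] [IsScalarTower k K W] [FiniteDimensional k W] [AddCommGroup T] [Module k T]
    [Module K T] [IsScalarTower k K T] [FiniteDimensional k T]
    (e : DiagTensor k K X W ≃ₗ[K] X ⊗[k] W) (n : ℕ) :
    Module.finrank k (DiagTensor k K (Fin n → X) W →ₗ[K] T) =
      n * (Module.finrank k W * Module.finrank k (X →ₗ[K] T)) := by
  have := finiteDimensional_linearMap (k := k) (A := K) X T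
  have := finiteDimensional_linearMap (k := k) (A := K) (DiagTensor k K X W) T
  rw [finrank_linearMap_congr T (piEquiv k K (Fin n)), finrank_linearMap_pi,
    finrank_linearMap_congr T (e.trans (leftTensorEquiv k K)), finrank_linearMap_pi,
    Fintype.card_fin, Fintype.card_fin]

variable [Ring H] [HopfAlgebra k H] [FiniteDimensional k K] [Module K H] [IsScalarTower k K H]

theorem eq_zero_of_forall_hom_diagTensor_eq_zero (j : K →ₐc[k] H) (hj : Function.Injective j)
    (hH : ∀ (b : K) (x : H), b • x = j b * x) (S : Type*) [AddCommGroup S] [Module k S]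
    [Module K S] [IsScalarTower k K S] [Nontrivial S] {x : K}
    (h : ∀ f : DiagTensor k K K H →ₗ[K] S, f (of k K (x ⊗ₜ 1)) = 0) : x = 0 := by
  refine eq_zero_of_contract_comul_mem ((Module.annihilator K S).restrictScalars k)
    (fun y hy b => ?_) (fun h1 => ?_) (ℛ k x) fun ω => ?_
  · rw [Submodule.restrictScalars_mem, Module.mem_annihilator] at hy ⊢
    intro s
    rw [mul_smul, hy]
  · obtain ⟨s, hs⟩ := exists_ne (0 : S)
    rw [Submodule.restrictScalars_mem, Module.mem_annihilator] at h1
    exact hs (by simpa using h1 s)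
  · rw [Submodule.restrictScalars_mem, Module.mem_annihilator]
    intro s
    obtain ⟨g, hg⟩ := ((j : K →ₗ[k] H) ∘ₗ antipode k).exists_leftInverse_of_injective
      (LinearMap.ker_eq_bot.mpr (hj.comp (antipode_injective k K)))
    let e : DiagTensor k K K H ≃ₗ[K] K ⊗[k] H :=
      twistEquivOfHom K (BialgHom.id k K) (fun _ _ => rfl) fun _ _ => rfl
    have he : e (of k K (x ⊗ₜ 1)) =
        ∑ i ∈ (ℛ k x).index, (ℛ k x).left i ⊗ₜ (antipode k ((ℛ k x).right i) • (1 : H)) :=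
      twistEquiv_symm_tmul _ (ℛ k x) _
    have hf := h (LinearMap.toSpanSingleton K S s ∘ₗ
      (TensorProduct.AlgebraTensorModule.rid k K K).toLinearMap ∘ₗ
      TensorProduct.AlgebraTensorModule.lTensor K K (ω ∘ₗ g) ∘ₗ e.toLinearMap)
    have hg' (y : K) : g (j (antipode k y)) = y := LinearMap.congr_fun hg y
    simpa [he, hH, hg', Finset.sum_smul] using hf

variable [FiniteDimensional k H]

/-- Up to powers, a finite-dimensional Hopf algebra is free over a Hopf subalgebra. -/
theorem exists_linearEquiv_pow [Nontrivial K] (j : K →ₐc[k] H) (hj : Function.Injective j)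
    (hH : ∀ (b : K) (x : H), b • x = j b * x) :
    ∃ t r : ℕ, 0 < r ∧ Nonempty ((Fin t → K) ≃ₗ[K] (Fin r → H)) := by
  obtain ⟨m, t, r, f, hm, hr, heq, hf⟩ := exists_surjective_pow (k := k) (A := K) H
  refine ⟨t, r, hr, ⟨LinearEquiv.ofBijective f ⟨?_, hf⟩⟩⟩
  have : Nontrivial (K ⧸ m) := Submodule.Quotient.nontrivial_iff.mpr hm.ne_top
  have := finiteDimensional_linearMap (k := k) (A := K) (DiagTensor k K (Fin t → K) H) (K ⧸ m)
  have := finiteDimensional_linearMap (k := k) (A := K) (DiagTensor k K (Fin r → H) H) (K ⧸ m)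
  let F := LinearMap.lcomp k (K ⧸ m) (DiagTensor.map (W := H) (k := k) f)
  have hinj : Function.Injective F := fun g g' hgg => LinearMap.ext fun u => by
    obtain ⟨v, rfl⟩ := map_surjective (W := H) (k := k) f hf u
    exact LinearMap.congr_fun hgg v
  have hsurj : Function.Surjective F := by
    refine (LinearMap.injective_iff_surjective_of_finrank_eq_finrank ?_).mp hinj
    rw [finrank_hom_diagTensor_pi (K ⧸ m)
        (twistEquivOfHom (W := H) K (BialgHom.id k K) (fun _ _ => rfl) fun _ _ => rfl),
      finrank_hom_diagTensor_pi (K ⧸ m) (twistEquivOfHom (W := H) K j hH hH),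
      (LinearMap.ringLmapEquivSelf K k (K ⧸ m)).finrank_eq, mul_left_comm, heq, mul_left_comm]
  rw [← LinearMap.ker_eq_bot, LinearMap.ker_eq_bot']
  intro n hn
  ext i
  refine eq_zero_of_forall_hom_diagTensor_eq_zero j hj hH (K ⧸ m) fun g => ?_
  obtain ⟨g', hg'⟩ := hsurj (g ∘ₗ DiagTensor.map (LinearMap.proj i))
  have := LinearMap.congr_fun hg' (of k K (n ⊗ₜ 1))
  simpa [F, map_of_tmul, hn] using this.symm

/-- The Nichols–Zoeller divisibility for an injective homomorphism of Hopf algebras. -/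
theorem finrank_dvd_of_bialgHom (j : K →ₐc[k] H) (hj : Function.Injective j)
    (hH : ∀ (b : K) (x : H), b • x = j b * x) : Module.finrank k K ∣ Module.finrank k H := by
  have : Nontrivial K := (Bialgebra.counitAlgHom k K).toRingHom.domain_nontrivial
  obtain ⟨t, r, hr, ⟨e⟩⟩ := exists_linearEquiv_pow j hj hH
  let : Module K k := Module.compHom k (Bialgebra.counitAlgHom k K).toRingHom
  have hs (b : K) (c : k) : b • c = counit (R := k) b * c := rfl
  have : IsScalarTower k K k := ⟨fun c b d => by simp [hs, mul_assoc]⟩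
  have := finiteDimensional_linearMap (k := k) (A := K) H k
  have := finiteDimensional_linearMap (k := k) (A := K) K k
  have ht : t = r * Module.finrank k (H →ₗ[K] k) := by
    have h := finrank_linearMap_congr (k := k) k e
    rw [finrank_linearMap_pi, finrank_linearMap_pi,
      (LinearMap.ringLmapEquivSelf K k k).finrank_eq] at h
    simpa using h
  have hd := (e.restrictScalars k).finrank_eq
  rw [Module.finrank_pi_fintype, Module.finrank_pi_fintype] at hd
  simp only [Finset.sum_const, Finset.card_univ, Fintype.card_fin, smul_eq_mul] at hd
  rw [ht, mul_assoc] at hd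
  exact ⟨_, (Nat.eq_of_mul_eq_mul_left hr hd).symm.trans (mul_comm _ _)⟩

end Freeness

section HopfSubalgebra

open Coalgebra HopfAlgebra

variable {k K H : Type*} [Field k] [Ring K] [Algebra k K] [Ring H]

/-- The coalgebra structure induced along an injective linear map into a coalgebra. -/
abbrev coalgebraOfInjective {C D : Type*} [AddCommGroup C] [Module k C] [AddCommGroup D]
    [Module k D] [Coalgebra k D] (j : C →ₗ[k] D) (hj : Function.Injective j)
    (δ : C →ₗ[k] C ⊗[k] C) (hδ : TensorProduct.map j j ∘ₗ δ = comul ∘ₗ j) : Coalgebra k C where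
  comul := δ
  counit := counit ∘ₗ j
  coassoc := by
    have hinj : Function.Injective (TensorProduct.map j (TensorProduct.map j j)) :=
      TensorProduct.map_injective_of_flat_flat _ _ hj
        (TensorProduct.map_injective_of_flat_flat _ _ hj hj)
    have hl : TensorProduct.map j (TensorProduct.map j j) ∘ₗ
        (TensorProduct.assoc k C C C).toLinearMap ∘ₗ δ.rTensor C =
          (TensorProduct.assoc k D D D).toLinearMap ∘ₗ
          (comul (R := k) (A := D)).rTensor D ∘ₗ TensorProduct.map j j := by
      rw [← LinearMap.comp_assoc, TensorProduct.map_map_comp_assoc_eq, LinearMap.comp_assoc,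
        LinearMap.map_comp_rTensor, LinearMap.rTensor_comp_map, hδ]
    have hr : TensorProduct.map j (TensorProduct.map j j) ∘ₗ δ.lTensor C =
        (comul (R := k) (A := D)).lTensor D ∘ₗ TensorProduct.map j j := by
      rw [LinearMap.map_comp_lTensor, LinearMap.lTensor_comp_map, hδ]
    ext x
    apply hinj
    have hx := LinearMap.congr_fun hδ x
    have h1 := LinearMap.congr_fun hl (δ x)
    have h2 := LinearMap.congr_fun hr (δ x)
    simp only [LinearMap.comp_apply, LinearEquiv.coe_coe] at hx h1 h2 ⊢
    rw [h1, h2, hx]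
    exact coassoc_apply (j x)
  rTensor_counit_comp_comul := by
    ext x
    apply Module.Flat.lTensor_preserves_injective_linearMap (M := k) j hj
    have hx := LinearMap.congr_fun hδ x
    have h := LinearMap.congr_fun (show j.lTensor k ∘ₗ (counit ∘ₗ j).rTensor C =
        (counit (R := k) (A := D)).rTensor D ∘ₗ TensorProduct.map j j by
      rw [LinearMap.lTensor_comp_rTensor, LinearMap.rTensor_comp_map]) (δ x)
    simp only [LinearMap.comp_apply] at hx h ⊢
    rw [h, hx, rTensor_counit_comul]
    simp
  lTensor_counit_comp_comul := by
    ext x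
    apply Module.Flat.rTensor_preserves_injective_linearMap (M := k) j hj
    have hx := LinearMap.congr_fun hδ x
    have h := LinearMap.congr_fun (show j.rTensor k ∘ₗ (counit ∘ₗ j).lTensor C =
        (counit (R := k) (A := D)).lTensor D ∘ₗ TensorProduct.map j j by
      rw [LinearMap.rTensor_comp_lTensor, LinearMap.lTensor_comp_map]) (δ x)
    simp only [LinearMap.comp_apply] at hx h ⊢
    rw [h, hx, lTensor_counit_comul]
    simp

/-- The bialgebra structure induced along an injective algebra homomorphism into a bialgebra. -/
abbrev bialgebraOfInjective [Bialgebra k H] (j : K →ₐ[k] H) (hj : Function.Injective j)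
    (δ : K →ₗ[k] K ⊗[k] K)
    (hδ : TensorProduct.map j.toLinearMap j.toLinearMap ∘ₗ δ = comul ∘ₗ j.toLinearMap) :
    Bialgebra k K :=
  let _ := coalgebraOfInjective j.toLinearMap hj δ hδ
  have hinj : Function.Injective (Algebra.TensorProduct.map j j) :=
    TensorProduct.map_injective_of_flat_flat j.toLinearMap j.toLinearMap hj hj
  have hδ' (x : K) : Algebra.TensorProduct.map j j (δ x) = comul (R := k) (j x) :=
    LinearMap.congr_fun hδ x
  Bialgebra.mk' k K
    (by change counit (j 1) = 1; simp)
    (by intro a b; change counit (j (a * b)) = counit (j a) * counit (j b); simp)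
    (by change δ 1 = 1; apply hinj; simp [hδ'])
    (by intro a b; change δ (a * b) = δ a * δ b; apply hinj; simp [hδ'])

/-- The Hopf algebra structure induced along an injective algebra homomorphism into a Hopf
algebra. -/
abbrev hopfAlgebraOfInjective [HopfAlgebra k H] (j : K →ₐ[k] H) (hj : Function.Injective j)
    (δ : K →ₗ[k] K ⊗[k] K)
    (hδ : TensorProduct.map j.toLinearMap j.toLinearMap ∘ₗ δ = comul ∘ₗ j.toLinearMap)
    (σ : K →ₗ[k] K) (hσ : j.toLinearMap ∘ₗ σ = antipode k ∘ₗ j.toLinearMap) :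
    HopfAlgebra k K :=
  { bialgebraOfInjective j hj δ hδ with
    antipode := σ
    mul_antipode_rTensor_comul := by
      ext x
      apply hj
      have hx := LinearMap.congr_fun hδ x
      have h := LinearMap.congr_fun (show j.toLinearMap ∘ₗ LinearMap.mul' k K ∘ₗ σ.rTensor K =
          LinearMap.mul' k H ∘ₗ (antipode k).rTensor H ∘ₗ
            TensorProduct.map j.toLinearMap j.toLinearMap by
        rw [LinearMap.rTensor_comp_map, ← hσ]
        ext a b
        simp) (δ x)
      refine h.trans ?_
      simp only [LinearMap.comp_apply] at hx ⊢
      rw [hx]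
      simp
      rfl
    mul_antipode_lTensor_comul := by
      ext x
      apply hj
      have hx := LinearMap.congr_fun hδ x
      have h := LinearMap.congr_fun (show j.toLinearMap ∘ₗ LinearMap.mul' k K ∘ₗ σ.lTensor K =
          LinearMap.mul' k H ∘ₗ (antipode k).lTensor H ∘ₗ
            TensorProduct.map j.toLinearMap j.toLinearMap by
        rw [LinearMap.lTensor_comp_map, ← hσ]
        ext a b
        simp) (δ x)
      refine h.trans ?_
      simp only [LinearMap.comp_apply] at hx ⊢
      rw [hx]
      simp
      rfl }

end HopfSubalgebra

/-- The Nichols–Zoeller theorem: the dimension of a Hopf subalgebra of a finite-dimensional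
Hopf algebra `H` divides the dimension of `H`. -/
theorem stmt_14 (k H : Type*) [Field k] [Ring H] [HopfAlgebra k H]
    [FiniteDimensional k H] (K : Subalgebra k H) (hK : IsHopfSubalgebra k K) :
    Module.finrank k K ∣ Module.finrank k H := by
  have hinj : Function.Injective (TensorProduct.map K.val.toLinearMap K.val.toLinearMap) :=
    TensorProduct.map_injective_of_flat_flat _ _ Subtype.val_injective Subtype.val_injective
  let δ : K →ₗ[k] K ⊗[k] K := (LinearEquiv.ofInjective _ hinj).symm.toLinearMap ∘ₗ
    (Coalgebra.comul ∘ₗ K.val.toLinearMap).codRestrict _ fun x => hK.1 x x.2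
  have hδ : TensorProduct.map K.val.toLinearMap K.val.toLinearMap ∘ₗ δ =
      Coalgebra.comul ∘ₗ K.val.toLinearMap := LinearMap.ext fun x =>
    congrArg Subtype.val ((LinearEquiv.ofInjective _ hinj).apply_symm_apply _)
  let σ : K →ₗ[k] K := (HopfAlgebra.antipode k).restrict (p := K.toSubmodule)
    (q := K.toSubmodule) hK.2
  let _ : HopfAlgebra k K := hopfAlgebraOfInjective K.val Subtype.val_injective δ hδ σ rfl
  let j : K →ₐc[k] H := BialgHom.ofAlgHom K.val rfl (AlgHom.ext (LinearMap.congr_fun hδ))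
  exact finrank_dvd_of_bialgHom j Subtype.val_injective fun _ _ => rfl
end

section
/- Let H be a finite-dimensional Hopf algebra over a field k, π : H → H̄ a surjective Hopf algebra map, and K a Hopf subalgebra of H with π(K) central in H̄ and contained in a central Hopf subalgebra Z̄ of H̄. If K and Z̄ are normal Hopf subalgebras, then there is a surjective Hopf algebra map H/HK⁺ → H̄/H̄Z̄⁺ and consequently dim_k(H̄)/dim_k(Z̄) divides dim_k(H)/dim_k(K). -/
open TensorProduct

/-- The left adjoint action `h ⊗ x ↦ h₍₁₎ x S(h₍₂₎)` of a Hopf algebra on itself. -/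
noncomputable def adjL (k H : Type*) [CommRing k] [Ring H] [HopfAlgebra k H] :
    H ⊗[k] H →ₗ[k] H :=
  LinearMap.mul' k H ∘ₗ
    LinearMap.lTensor H
      (LinearMap.mul' k H ∘ₗ
        TensorProduct.map LinearMap.id (HopfAlgebra.antipode (R := k)) ∘ₗ
        (TensorProduct.comm k H H).toLinearMap) ∘ₗ
    (TensorProduct.assoc k H H H).toLinearMap ∘ₗ
    LinearMap.rTensor H (Coalgebra.comul (R := k))

/-- The right adjoint action `h ⊗ x ↦ S(h₍₁₎) x h₍₂₎` of a Hopf algebra on itself. -/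
noncomputable def adjR (k H : Type*) [CommRing k] [Ring H] [HopfAlgebra k H] :
    H ⊗[k] H →ₗ[k] H :=
  LinearMap.mul' k H ∘ₗ
    TensorProduct.map (HopfAlgebra.antipode (R := k))
      (LinearMap.mul' k H ∘ₗ (TensorProduct.comm k H H).toLinearMap) ∘ₗ
    (TensorProduct.assoc k H H H).toLinearMap ∘ₗ
    LinearMap.rTensor H (Coalgebra.comul (R := k))

/-- A Hopf subalgebra is normal if it is stable under both adjoint actions. -/
def IsNormalHopfSubalgebra (k : Type*) {H : Type*} [CommRing k] [Ring H] [HopfAlgebra k H]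
    (K : Subalgebra k H) : Prop :=
  ∀ (h : H), ∀ x ∈ K, adjL k H (h ⊗ₜ[k] x) ∈ K ∧ adjR k H (h ⊗ₜ[k] x) ∈ K

section BalancedForms

set_option maxSynthPendingDepth 3

lemma finrank_le_add_of_ker_le_range {k M N P : Type*} [Field k] [AddCommGroup M] [Module k M]
    [AddCommGroup N] [Module k N] [AddCommGroup P] [Module k P] [FiniteDimensional k M]
    [FiniteDimensional k N] [FiniteDimensional k P] {f : M →ₗ[k] N} {g : P →ₗ[k] M}
    (h : LinearMap.ker f ≤ LinearMap.range g) :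
    Module.finrank k M ≤ Module.finrank k N + Module.finrank k P := by
  rw [← LinearMap.finrank_range_add_finrank_ker f]
  exact add_le_add (Submodule.finrank_le _)
    ((Submodule.finrank_mono h).trans (LinearMap.finrank_range_le _))

variable {k K H : Type*} [Field k] [Ring K] [Ring H]

section Algebra

variable [Algebra k K] [Algebra k H] (i : K →ₐ[k] H)

/-- The linear forms on `H ⊗[k] V` that are balanced over `K`; this is the dual space of
`H ⊗[K] V`. -/
def balancedForms {V : Type*} [AddCommGroup V] [Module k V] (ρ : K →ₐ[k] Module.End k V) :
    Submodule k (Module.Dual k (H ⊗[k] V)) where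
  carrier := {T | ∀ h x v, T ((h * i x) ⊗ₜ v) = T (h ⊗ₜ ρ x v)}
  add_mem' hS hT h x v := by simp [hS h x v, hT h x v]
  zero_mem' _ _ _ := by simp
  smul_mem' c T hT h x v := by simp [hT h x v]

variable {V V' V'' : Type*} [AddCommGroup V] [Module k V] [AddCommGroup V'] [Module k V']
  [AddCommGroup V''] [Module k V'']

/-- A linear map commuting with two representations of `K`. -/
def Intertwines (ρ : K →ₐ[k] Module.End k V) (ρ' : K →ₐ[k] Module.End k V') (f : V →ₗ[k] V') :
    Prop :=
  ∀ x v, f (ρ x v) = ρ' x (f v)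

/-- Pulling balanced forms back along an intertwiner. -/
def balancedForms.comap {ρ : K →ₐ[k] Module.End k V} {ρ' : K →ₐ[k] Module.End k V'}
    {f : V →ₗ[k] V'} (hf : Intertwines ρ ρ' f) :
    balancedForms i ρ' →ₗ[k] balancedForms i ρ where
  toFun T := ⟨T.1 ∘ₗ f.lTensor H, fun h x v ↦ by simp [T.2 h x (f v), hf x v]⟩
  map_add' _ _ := rfl
  map_smul' _ _ := rfl

/-- The restriction of a representation to an invariant subspace. -/
def subRep (ρ : K →ₐ[k] Module.End k V) (A : Submodule k V) (hA : ∀ x, ∀ v ∈ A, ρ x v ∈ A) :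
    K →ₐ[k] Module.End k A :=
  .ofLinearMap
    { toFun := fun x ↦ (ρ x).restrict (hA x)
      map_add' := fun x y ↦ by ext; simp
      map_smul' := fun c x ↦ by ext; simp }
    (by ext; simp) (fun x y ↦ by ext; simp)

/-- The representation induced on the quotient by an invariant subspace. -/
def quotRep (ρ : K →ₐ[k] Module.End k V) (A : Submodule k V) (hA : ∀ x, ∀ v ∈ A, ρ x v ∈ A) :
    K →ₐ[k] Module.End k (V ⧸ A) :=
  .ofLinearMap
    { toFun := fun x ↦ A.mapQ A (ρ x) (hA x)
      map_add' := fun x y ↦ by ext; simp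
      map_smul' := fun c x ↦ by ext; simp }
    (by ext; simp) (fun x y ↦ by ext; simp)

lemma intertwines_subtype (ρ : K →ₐ[k] Module.End k V) (A : Submodule k V)
    (hA : ∀ x, ∀ v ∈ A, ρ x v ∈ A) : Intertwines (subRep ρ A hA) ρ A.subtype :=
  fun _ _ ↦ rfl

lemma intertwines_mkQ (ρ : K →ₐ[k] Module.End k V) (A : Submodule k V)
    (hA : ∀ x, ∀ v ∈ A, ρ x v ∈ A) : Intertwines ρ (quotRep ρ A hA) A.mkQ :=
  fun _ _ ↦ rfl

variable [FiniteDimensional k H] [FiniteDimensional k V]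

lemma finrank_balancedForms_le (ρ : K →ₐ[k] Module.End k V) :
    Module.finrank k (balancedForms i ρ) ≤ Module.finrank k H * Module.finrank k V := by
  refine (Submodule.finrank_le _).trans ?_
  simp [Module.finrank_tensorProduct]

lemma finrank_balancedForms_le_of_surjective {ρ : K →ₐ[k] Module.End k V}
    {ρ' : K →ₐ[k] Module.End k V'} {f : V →ₗ[k] V'} (hf : Intertwines ρ ρ' f)
    (hs : Function.Surjective f) :
    Module.finrank k (balancedForms i ρ') ≤ Module.finrank k (balancedForms i ρ) := by
  refine LinearMap.finrank_le_finrank_of_injective (f := balancedForms.comap i hf) ?_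
  rw [injective_iff_map_eq_zero]
  intro T hT
  refine Subtype.ext (TensorProduct.ext' fun h w ↦ ?_)
  obtain ⟨v, rfl⟩ := hs w
  exact congr($hT.1 (h ⊗ₜ v))

/-- Subadditivity, the dual form of right exactness of `H ⊗[K] -`. -/
lemma finrank_balancedForms_le_add [FiniteDimensional k V'] [FiniteDimensional k V'']
    {ρ : K →ₐ[k] Module.End k V} {ρ' : K →ₐ[k] Module.End k V'}
    {ρ'' : K →ₐ[k] Module.End k V''} {f : V' →ₗ[k] V} {g : V →ₗ[k] V''}
    (hf : Intertwines ρ' ρ f) (hg : Intertwines ρ ρ'' g) (hgs : Function.Surjective g)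
    (hfg : LinearMap.ker g ≤ LinearMap.range f) :
    Module.finrank k (balancedForms i ρ) ≤
      Module.finrank k (balancedForms i ρ') + Module.finrank k (balancedForms i ρ'') := by
  have hker : LinearMap.ker (balancedForms.comap i hf) ≤
      LinearMap.range (balancedForms.comap i hg) := by
    intro T hT
    obtain ⟨s, hs⟩ := g.exists_rightInverse_of_surjective (LinearMap.range_eq_top.2 hgs)
    have hzero (h : H) (v : V) (hv : g v = 0) : T.1 (h ⊗ₜ v) = 0 := by
      obtain ⟨u, rfl⟩ := hfg hv
      exact congr($(LinearMap.mem_ker.1 hT).1 (h ⊗ₜ u))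
    have hgs' (w : V'') : g (s w) = w := congr($hs w)
    have hsg (h : H) (v : V) : T.1 (h ⊗ₜ s (g v)) = T.1 (h ⊗ₜ v) := by
      rw [← sub_eq_zero, ← map_sub, ← TensorProduct.tmul_sub]
      exact hzero _ _ (by simp [hgs'])
    refine ⟨⟨T.1 ∘ₗ s.lTensor H, fun h x w ↦ ?_⟩, ?_⟩
    · simp only [LinearMap.comp_apply, LinearMap.lTensor_tmul]
      rw [T.2, ← hsg, hg, hgs']
    · exact Subtype.ext (TensorProduct.ext' hsg)
  exact finrank_le_add_of_ker_le_range (M := balancedForms i ρ) (N := balancedForms i ρ')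
    (P := balancedForms i ρ'') hker

/-- The ratio `p / d` bounds the dimension growth of `H ⊗[K] -` on small representations. -/
def RatioBound (p d : ℕ) : Prop :=
  ∀ (n : ℕ) (ρ : K →ₐ[k] Module.End k (Fin n → k)), n ≤ Module.finrank k K →
    Module.finrank k (balancedForms i ρ) * d ≤ p * n

/-- The representation `ρ` attains the ratio `p / d`. -/
def Attains (p d : ℕ) (ρ : K →ₐ[k] Module.End k V) : Prop :=
  Module.finrank k (balancedForms i ρ) * d = p * Module.finrank k V

lemma exists_ratioBound_attains [FiniteDimensional k K] (ε : K →ₐ[k] k) :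
    ∃ (d p : ℕ) (ρ : K →ₐ[k] Module.End k (Fin d → k)),
      0 < d ∧ RatioBound i p d ∧ Attains i p d ρ := by
  let s : Set (ℕ × ℕ) := {q | 0 < q.1 ∧ q.1 ≤ Module.finrank k K ∧
    ∃ ρ : K →ₐ[k] Module.End k (Fin q.1 → k), Module.finrank k (balancedForms i ρ) = q.2}
  have hs : s.Finite := by
    refine ((Set.finite_Iic (Module.finrank k K)).prod
      (Set.finite_Iic (Module.finrank k H * Module.finrank k K))).subset ?_
    rintro ⟨n, p⟩ ⟨-, hn, ρ, hρ⟩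
    refine ⟨hn, hρ.symm.le.trans <| (finrank_balancedForms_le i ρ).trans ?_⟩
    simpa using Nat.mul_le_mul_left _ hn
  have : Nontrivial K := ε.toRingHom.domain_nontrivial
  have hne : s.Nonempty := ⟨(1, Module.finrank k (balancedForms i
    ((Algebra.ofId k (Module.End k (Fin 1 → k))).comp ε))), one_pos, Module.finrank_pos, _, rfl⟩
  obtain ⟨⟨d, p⟩, ⟨hd, -, ρ, hρ⟩, hmax⟩ := Set.exists_max_image s
    (fun q : ℕ × ℕ ↦ (q.2 / q.1 : ℚ)) hs hne
  simp only at hd ρ hρ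
  refine ⟨d, p, ρ, hd, fun n ρ' hn ↦ ?_, by simp [Attains, hρ]⟩
  obtain rfl | hn0 := n.eq_zero_or_pos
  · have := finrank_balancedForms_le i ρ'
    simp_all
  · have := hmax (n, Module.finrank k (balancedForms i ρ')) ⟨hn0, hn, ρ', rfl⟩
    rw [div_le_div_iff₀ (by exact_mod_cast hn0) (by exact_mod_cast hd)] at this
    exact_mod_cast this

end Algebra

end BalancedForms

section RatioBound

set_option maxSynthPendingDepth 3

variable {k K H : Type*} [Field k] [Ring K] [Ring H] [Algebra k K] [Algebra k H]
  [FiniteDimensional k H] {i : K →ₐ[k] H} {p d : ℕ}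

lemma RatioBound.le_of_finrank_le (hb : RatioBound i p d) {V : Type*} [AddCommGroup V] [Module k V]
    [FiniteDimensional k V] (ρ : K →ₐ[k] Module.End k V)
    (hV : Module.finrank k V ≤ Module.finrank k K) :
    Module.finrank k (balancedForms i ρ) * d ≤ p * Module.finrank k V := by
  let e := (Module.finBasis k V).equivFun
  have he : Intertwines ((e.conjAlgEquiv k).toAlgHom.comp ρ) ρ e.symm.toLinearMap :=
    fun x v ↦ by simp
  exact (Nat.mul_le_mul_right d
    (finrank_balancedForms_le_of_surjective i he e.symm.surjective)).trans (hb _ _ hV)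

variable [FiniteDimensional k K]

/-- The dimension growth of `H ⊗[K] -` is bounded on all finite-dimensional representations, by
cutting off cyclic subrepresentations. -/
lemma RatioBound.le (hb : RatioBound i p d) {V : Type*} [AddCommGroup V] [Module k V]
    [FiniteDimensional k V] (ρ : K →ₐ[k] Module.End k V) :
    Module.finrank k (balancedForms i ρ) * d ≤ p * Module.finrank k V := by
  obtain ⟨n, hn⟩ : ∃ n, Module.finrank k V = n := ⟨_, rfl⟩
  induction n using Nat.strong_induction_on generalizing V with
  | _ n ih =>
  obtain hV | hV := le_or_gt (Module.finrank k V) (Module.finrank k K)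
  · exact hb.le_of_finrank_le ρ hV
  have : Nontrivial V := Module.nontrivial_of_finrank_pos (R := k) (by omega)
  obtain ⟨v, hv⟩ := exists_ne (0 : V)
  let A : Submodule k V := LinearMap.range (LinearMap.applyₗ v ∘ₗ ρ.toLinearMap)
  have hA (x : K) (w : V) (hw : w ∈ A) : ρ x w ∈ A := by
    obtain ⟨y, rfl⟩ := hw
    exact ⟨x * y, by simp⟩
  have hvA : v ∈ A := ⟨1, by simp⟩
  have hA0 : 0 < Module.finrank k A := by
    rw [Module.finrank_pos_iff]
    exact ⟨⟨v, hvA⟩, 0, fun h ↦ hv congr($h.1)⟩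
  have hAle : Module.finrank k A ≤ Module.finrank k K := LinearMap.finrank_range_le _
  have hadd := A.finrank_quotient_add_finrank
  have hsub := finrank_balancedForms_le_add i (intertwines_subtype ρ A hA)
    (intertwines_mkQ ρ A hA) A.mkQ_surjective (by simp)
  have h₁ := hb.le_of_finrank_le (subRep ρ A hA) hAle
  have h₂ := ih _ (by omega) (quotRep ρ A hA) rfl
  calc
    _ ≤ _ := Nat.mul_le_mul_right d hsub
    _ ≤ p * Module.finrank k A + p * Module.finrank k (V ⧸ A) := by rw [add_mul]; omega
    _ = p * Module.finrank k V := by rw [← hadd]; ring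

variable {V V' : Type*} [AddCommGroup V] [Module k V] [AddCommGroup V'] [Module k V']
  [FiniteDimensional k V] [FiniteDimensional k V'] {ρ : K →ₐ[k] Module.End k V}
  {ρ' : K →ₐ[k] Module.End k V'}

lemma Attains.of_injective (hb : RatioBound i p d) (h : Attains i p d ρ) {f : V' →ₗ[k] V}
    (hf : Intertwines ρ' ρ f) (hinj : Function.Injective f) : Attains i p d ρ' := by
  have hA (x : K) (w : V) (hw : w ∈ LinearMap.range f) : ρ x w ∈ LinearMap.range f := by
    obtain ⟨y, rfl⟩ := hw
    exact ⟨ρ' x y, hf x y⟩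
  have hsub := Nat.mul_le_mul_right d <| finrank_balancedForms_le_add i hf
    (intertwines_mkQ ρ _ hA) (Submodule.mkQ_surjective _) (by simp)
  have hadd := (LinearMap.range f).finrank_quotient_add_finrank
  rw [LinearMap.finrank_range_of_inj hinj] at hadd
  have h₁ := hb.le ρ'
  have h₂ := hb.le (quotRep ρ _ hA)
  rw [h, ← hadd, add_mul, mul_add] at hsub
  exact le_antisymm h₁ (by omega)

lemma Attains.of_surjective (hb : RatioBound i p d) (h : Attains i p d ρ) {g : V →ₗ[k] V'}
    (hg : Intertwines ρ ρ' g) (hsurj : Function.Surjective g) : Attains i p d ρ' := by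
  have hA (x : K) (w : V) (hw : w ∈ LinearMap.ker g) : ρ x w ∈ LinearMap.ker g := by
    rw [LinearMap.mem_ker] at hw ⊢
    rw [hg, hw, map_zero]
  have hsub := Nat.mul_le_mul_right d <| finrank_balancedForms_le_add i
    (intertwines_subtype ρ _ hA) hg hsurj (by simp)
  have hadd := g.finrank_range_add_finrank_ker
  rw [LinearMap.range_eq_top.2 hsurj, finrank_top] at hadd
  have h₁ := hb.le ρ'
  have h₂ := hb.le (subRep ρ _ hA)
  rw [h, ← hadd, add_mul, mul_add] at hsub
  exact le_antisymm h₁ (by omega)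

end RatioBound

section TensorRepresentations

set_option maxSynthPendingDepth 3

open Coalgebra HopfAlgebra

variable {k K H : Type*} [Field k] [Ring K] [Ring H]

section Bialgebra

variable [Bialgebra k K]
  {V V' W W' : Type*} [AddCommGroup V] [Module k V] [AddCommGroup V'] [Module k V']
  [AddCommGroup W] [Module k W] [AddCommGroup W'] [Module k W']

/-- The diagonal representation of a bialgebra on a tensor product. -/
noncomputable def tensorRep (ρ : K →ₐ[k] Module.End k V) (τ : K →ₐ[k] Module.End k W) :
    K →ₐ[k] Module.End k (V ⊗[k] W) :=
  Module.endTensorEndAlgHom.comp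
    ((Algebra.TensorProduct.map ρ τ).comp (Bialgebra.comulAlgHom k K))

lemma tensorRep_tmul (ρ : K →ₐ[k] Module.End k V) (τ : K →ₐ[k] Module.End k W) (x : K)
    {ι : Type*} (r : Coalgebra.Repr k x ι) (v : V) (w : W) :
    tensorRep ρ τ x (v ⊗ₜ w) = ∑ j ∈ r.index, ρ (r.left j) v ⊗ₜ τ (r.right j) w := by
  simp [tensorRep, ← r.eq, Module.endTensorEndAlgHom_apply]

lemma Intertwines.lTensor (ρ : K →ₐ[k] Module.End k V) {τ : K →ₐ[k] Module.End k W}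
    {τ' : K →ₐ[k] Module.End k W'} {f : W →ₗ[k] W'} (hf : Intertwines τ τ' f) :
    Intertwines (tensorRep ρ τ) (tensorRep ρ τ') (f.lTensor V) := by
  intro x u
  induction u with
  | zero => simp
  | add u u' hu hu' => simp [hu, hu']
  | tmul v w => simp [tensorRep_tmul _ _ x (ℛ k x), hf _ _]

end Bialgebra

variable [HopfAlgebra k H]

/-- The inverse of the Galois map of a Hopf algebra. -/
lemma sum_comul_mul_one_tmul_antipode (a : H) {ι : Type*}
    (r : Coalgebra.Repr k a ι) :
    ∑ j ∈ r.index, comul (R := k) (r.left j) * (1 ⊗ₜ antipode k (r.right j)) = a ⊗ₜ[k] (1 : H) := by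
  let Φ : (H ⊗[k] H) ⊗[k] H →ₗ[k] H ⊗[k] H :=
    TensorProduct.lift ((LinearMap.mul k (H ⊗[k] H)).compl₂
      (TensorProduct.mk k H H 1 ∘ₗ antipode k))
  have hΦ : Φ ∘ₗ (TensorProduct.assoc k H H H).symm.toLinearMap =
      LinearMap.lTensor H (LinearMap.mul' k H ∘ₗ LinearMap.lTensor H (antipode k)) := by
    ext x y z
    simp [Φ]
  have h : Φ ((TensorProduct.assoc k H H H).symm (comul.lTensor H (comul a))) =
      Φ (comul.rTensor H (comul a)) := congr(Φ $(Coalgebra.coassoc_symm_apply (R := k) a))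
  have h' := congr($hΦ (comul.lTensor H (comul a)))
  have h'' := congr((Algebra.linearMap k H).lTensor H $(sum_tmul_counit_eq r))
  simp only [LinearMap.comp_apply, LinearEquiv.coe_coe, h] at h'
  simp only [map_sum, LinearMap.lTensor_tmul, Algebra.linearMap_apply, map_one] at h''
  rw [← h'']
  simpa [← r.eq, Φ, mul_antipode_lTensor_comul_apply] using h'

variable [Bialgebra k K] (i : K →ₐc[k] H)
  {V W : Type*} [AddCommGroup V] [Module k V] [AddCommGroup W] [Module k W]

variable (V) in
/-- The linear map `(a ⊗ b) ⊗ (v ⊗ w) ↦ (a ⊗ v) ⊗ σ b w`. -/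
noncomputable def actRight (σ : H →ₐ[k] Module.End k W) :
    (H ⊗[k] H) ⊗[k] (V ⊗[k] W) →ₗ[k] (H ⊗[k] V) ⊗[k] W :=
  (TensorProduct.lift σ.toLinearMap).lTensor (H ⊗[k] V) ∘ₗ
    (TensorProduct.tensorTensorTensorComm k H H V W).toLinearMap

@[simp]
lemma actRight_tmul (σ : H →ₐ[k] Module.End k W) (a b : H) (v : V) (w : W) :
    actRight V σ ((a ⊗ₜ b) ⊗ₜ (v ⊗ₜ w)) = (a ⊗ₜ v) ⊗ₜ σ b w := by
  simp [actRight]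

variable (V) in
/-- The linear map `h ⊗ (v ⊗ w) ↦ (h₁ ⊗ v) ⊗ σ h₂ w`. -/
noncomputable def untwist (σ : H →ₐ[k] Module.End k W) :
    H ⊗[k] (V ⊗[k] W) →ₗ[k] (H ⊗[k] V) ⊗[k] W :=
  actRight V σ ∘ₗ (comul (R := k) (A := H)).rTensor (V ⊗[k] W)

lemma actRight_mul_one_tmul (σ : H →ₐ[k] Module.End k W) (t : H ⊗[k] H) (g : H) (v : V) (w : W) :
    actRight V σ ((t * (1 ⊗ₜ g)) ⊗ₜ (v ⊗ₜ w)) = actRight V σ (t ⊗ₜ (v ⊗ₜ σ g w)) := by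
  induction t with
  | zero => simp
  | add t t' ht ht' => simp only [add_mul, TensorProduct.add_tmul, map_add, ht, ht']
  | tmul a b => simp

lemma untwist_surjective (σ : H →ₐ[k] Module.End k W) : Function.Surjective (untwist V σ) := by
  rw [← LinearMap.range_eq_top, eq_top_iff]
  rintro u -
  induction u with
  | zero => exact zero_mem _
  | add u u' hu hu' => exact add_mem hu hu'
  | tmul u w =>
    induction u with
    | zero => simp
    | add u u' hu hu' => rw [TensorProduct.add_tmul]; exact add_mem hu hu'
    | tmul a v =>
      have h := congr(actRight V σ ($(sum_comul_mul_one_tmul_antipode (k := k) a (ℛ k a)) ⊗ₜ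
        (v ⊗ₜ w)))
      rw [actRight_tmul, map_one, Module.End.one_apply, TensorProduct.sum_tmul, map_sum] at h
      rw [← h]
      refine sum_mem fun j _ ↦ ?_
      rw [actRight_mul_one_tmul]
      exact ⟨(ℛ k a).left j ⊗ₜ (v ⊗ₜ σ (antipode k ((ℛ k a).right j)) w), rfl⟩

/-- The form on `(H ⊗ V) ⊗ W` associated with a family of balanced forms indexed by `W`. -/
noncomputable def balancedForms.uncurry {ρ : K →ₐ[k] Module.End k V} :
    (W →ₗ[k] balancedForms (i : K →ₐ[k] H) ρ) →ₗ[k] (H ⊗[k] V) ⊗[k] W →ₗ[k] k where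
  toFun T := TensorProduct.lift ((Submodule.subtype _ ∘ₗ T).flip)
  map_add' _ _ := TensorProduct.ext' fun _ _ ↦ by simp
  map_smul' _ _ := TensorProduct.ext' fun _ _ ↦ by simp

@[simp]
lemma balancedForms.uncurry_tmul {ρ : K →ₐ[k] Module.End k V}
    (T : W →ₗ[k] balancedForms (i : K →ₐ[k] H) ρ) (u : H ⊗[k] V) (w : W) :
    balancedForms.uncurry i T (u ⊗ₜ w) = (T w).1 u := by
  simp [balancedForms.uncurry]

lemma balancedForms.uncurry_actRight {ρ : K →ₐ[k] Module.End k V} (σ : H →ₐ[k] Module.End k W)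
    (T : W →ₗ[k] balancedForms (i : K →ₐ[k] H) ρ) (t : H ⊗[k] H) (s : K ⊗[k] K) (v : V) (w : W) :
    balancedForms.uncurry i T (actRight V σ
      ((t * Algebra.TensorProduct.map (i : K →ₐ[k] H) (i : K →ₐ[k] H) s) ⊗ₜ (v ⊗ₜ w))) =
    balancedForms.uncurry i T (actRight V σ (t ⊗ₜ Module.endTensorEndAlgHom (R := k) (S := k) (A := k)
      (Algebra.TensorProduct.map ρ (σ.comp (i : K →ₐ[k] H)) s) (v ⊗ₜ w))) := by
  induction s with
  | zero => simp
  | add s s' hs hs' =>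
    simp only [map_add, mul_add, TensorProduct.add_tmul, TensorProduct.tmul_add,
      LinearMap.add_apply, hs, hs']
  | tmul x y =>
    induction t with
    | zero => simp
    | add t t' ht ht' => simp only [add_mul, TensorProduct.add_tmul, map_add, ht, ht']
    | tmul a b =>
      simpa [Module.endTensorEndAlgHom_apply] using (T (σ b (σ (i y) w))).2 a x v

/-- A family of balanced forms on `H ⊗ V` indexed by `W` gives a balanced form on
`H ⊗ (V ⊗ W)`. -/
noncomputable def balancedForms.twist (ρ : K →ₐ[k] Module.End k V) (σ : H →ₐ[k] Module.End k W) :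
    (W →ₗ[k] balancedForms (i : K →ₐ[k] H) ρ) →ₗ[k]
      balancedForms (i : K →ₐ[k] H) (tensorRep ρ (σ.comp (i : K →ₐ[k] H))) where
  toFun T := ⟨balancedForms.uncurry i T ∘ₗ untwist V σ, fun h x u ↦ by
    induction u with
    | zero => simp
    | add u u' hu hu' => simp only [TensorProduct.tmul_add, map_add, hu, hu']
    | tmul v w =>
      have hi : comul (R := k) (i x) =
          Algebra.TensorProduct.map (i : K →ₐ[k] H) (i : K →ₐ[k] H) (comul x) :=
        (CoalgHomClass.map_comp_comul_apply i x).symm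
      have := balancedForms.uncurry_actRight i σ T (comul h) (comul x) v w
      rw [← hi] at this
      simpa [untwist, tensorRep] using this⟩
  map_add' _ _ := by ext; simp
  map_smul' _ _ := by ext; simp

lemma balancedForms.twist_injective (ρ : K →ₐ[k] Module.End k V)
    (σ : H →ₐ[k] Module.End k W) : Function.Injective (balancedForms.twist i ρ σ) := by
  rw [injective_iff_map_eq_zero]
  intro T hT
  have h (u : (H ⊗[k] V) ⊗[k] W) : balancedForms.uncurry i T u = 0 := by
    obtain ⟨u, rfl⟩ := untwist_surjective σ u
    exact congr($hT.1 u)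
  exact LinearMap.ext fun w ↦ Subtype.ext (LinearMap.ext fun u ↦ by simpa using h (u ⊗ₜ w))

variable [FiniteDimensional k H] [FiniteDimensional k V] [FiniteDimensional k W]

lemma finrank_mul_finrank_balancedForms_le (ρ : K →ₐ[k] Module.End k V)
    (σ : H →ₐ[k] Module.End k W) :
    Module.finrank k W * Module.finrank k (balancedForms (i : K →ₐ[k] H) ρ) ≤
      Module.finrank k (balancedForms (i : K →ₐ[k] H)
        (tensorRep ρ (σ.comp (i : K →ₐ[k] H)))) := by
  rw [← Module.finrank_linearMap k k]
  exact LinearMap.finrank_le_finrank_of_injective (balancedForms.twist_injective i ρ σ)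

variable [FiniteDimensional k K]

lemma Attains.tensorRep {p d : ℕ} (hb : RatioBound (i : K →ₐ[k] H) p d)
    {ρ : K →ₐ[k] Module.End k V} (h : Attains (i : K →ₐ[k] H) p d ρ)
    (σ : H →ₐ[k] Module.End k W) :
    Attains (i : K →ₐ[k] H) p d (tensorRep ρ (σ.comp (i : K →ₐ[k] H))) := by
  refine le_antisymm (hb.le _) ?_
  calc
    _ = p * Module.finrank k V * Module.finrank k W := by
      rw [Module.finrank_tensorProduct, mul_assoc]
    _ = Module.finrank k W * Module.finrank k (balancedForms (i : K →ₐ[k] H) ρ) * d := by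
      rw [← h]; ring
    _ ≤ _ := Nat.mul_le_mul_right d (finrank_mul_finrank_balancedForms_le i ρ σ)

end TensorRepresentations

section NicholsZoeller

set_option maxSynthPendingDepth 3

open Coalgebra HopfAlgebra

variable {k K H : Type*} [Field k] [Ring K] [Ring H]

section Representations

variable (k K) in
/-- The one-dimensional representation given by the counit. -/
noncomputable def trivRep [Bialgebra k K] : K →ₐ[k] Module.End k k :=
  (Algebra.ofId k (Module.End k k)).comp (Bialgebra.counitAlgHom k K)

@[simp]
lemma trivRep_apply [Bialgebra k K] (x : K) (c : k) : trivRep k K x c = counit (R := k) x * c := by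
  simp [trivRep, Algebra.ofId_apply, Module.algebraMap_end_apply]

variable [HopfAlgebra k K] {V : Type*} [AddCommGroup V] [Module k V]
  (ρ : K →ₐ[k] Module.End k V)

/-- The contragredient representation. -/
noncomputable def dualRep : K →ₐ[k] Module.End k (Module.Dual k V) :=
  .ofLinearMap
    { toFun := fun x ↦ (ρ (antipode k x)).dualMap
      map_add' := fun x y ↦ by ext; simp
      map_smul' := fun c x ↦ by ext; simp }
    (by ext; simp) (fun x y ↦ by ext; simp [antipode_mul_antidistrib])

@[simp]
lemma dualRep_apply (x : K) (f : Module.Dual k V) (v : V) :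
    dualRep ρ x f v = f (ρ (antipode k x) v) := rfl

/-- The action map `K ⊗ V → V` of a representation. -/
noncomputable def actionMap : K ⊗[k] V →ₗ[k] V := TensorProduct.lift ρ.toLinearMap

lemma intertwines_actionMap :
    Intertwines (Algebra.lsmul k k (K ⊗[k] V)) ρ (actionMap ρ) := by
  intro x u
  induction u with
  | zero => simp
  | add u u' hu hu' => simp only [map_add, hu, hu']
  | tmul y v => simp [actionMap, TensorProduct.smul_tmul']

lemma actionMap_surjective : Function.Surjective (actionMap ρ) :=
  fun v ↦ ⟨1 ⊗ₜ v, by simp [actionMap]⟩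

lemma intertwines_rTensor [HopfAlgebra k H] (i : K →ₐ[k] H) :
    Intertwines (Algebra.lsmul k k (K ⊗[k] V)) ((Algebra.lsmul k k (H ⊗[k] V)).comp i)
      (i.toLinearMap.rTensor V) := by
  intro x u
  induction u with
  | zero => simp
  | add u u' hu hu' => simp only [map_add, hu, hu']
  | tmul y v => simp [TensorProduct.smul_tmul']

variable [FiniteDimensional k V]

variable (k V) in
/-- The canonical isomorphism `V ⊗ V* ≃ End V`. -/
noncomputable def tensorDualEquivEnd : V ⊗[k] Module.Dual k V ≃ₗ[k] Module.End k V :=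
  TensorProduct.comm k V (Module.Dual k V) ≪≫ₗ dualTensorHomEquiv k V V

lemma tensorDualEquivEnd_tensorRep (x : K) {ι : Type*} (r : Coalgebra.Repr k x ι)
    (t : V ⊗[k] Module.Dual k V) :
    tensorDualEquivEnd k V (tensorRep ρ (dualRep ρ) x t) =
      ∑ j ∈ r.index, ρ (r.left j) * tensorDualEquivEnd k V t * ρ (antipode k (r.right j)) := by
  induction t with
  | zero => simp
  | add u u' hu hu' => simp only [map_add, hu, hu', mul_add, add_mul, Finset.sum_add_distrib]
  | tmul v f =>
    ext w
    simp [tensorDualEquivEnd, tensorRep_tmul _ _ x r, dualTensorHom_apply]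

lemma intertwines_coevaluation : Intertwines (trivRep k K) (tensorRep ρ (dualRep ρ))
    (LinearMap.toSpanSingleton k _ ((tensorDualEquivEnd k V).symm 1)) := by
  intro x c
  apply (tensorDualEquivEnd k V).injective
  have h := congr(ρ $(sum_mul_antipode_eq_algebraMap_counit (R := k) (ℛ k x)))
  rw [LinearMap.toSpanSingleton_apply, LinearMap.toSpanSingleton_apply, map_smul, map_smul,
    map_smul, tensorDualEquivEnd_tensorRep ρ x (ℛ k x)]
  simp only [map_sum, map_mul, AlgHom.commutes] at h
  simp [h, Algebra.algebraMap_eq_smul_one, smul_smul, mul_comm]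

end Representations

section Coinvariants

/-- The linear forms on `H` that are right invariant under `K`; this is the dual space of
`H / H i(K⁺)`. -/
def invariantForms [Bialgebra k K] [Algebra k H] (i : K →ₐ[k] H) :
    Submodule k (Module.Dual k H) where
  carrier := {T | ∀ h x, T (h * i x) = counit (R := k) x * T h}
  add_mem' hS hT h x := by simp [hS h x, hT h x, mul_add]
  zero_mem' _ _ := by simp
  smul_mem' c T hT h x := by simp [hT h x, mul_left_comm]

/-- Balanced forms for the trivial representation are invariant forms. -/
noncomputable def balancedFormsTrivEquiv [Bialgebra k K] [Algebra k H] (i : K →ₐ[k] H) :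
    balancedForms i (trivRep k K) ≃ₗ[k] invariantForms i where
  toFun T := ⟨T.1 ∘ₗ (TensorProduct.rid k H).symm.toLinearMap, fun h x ↦ by
    have := T.2 h x 1
    rw [trivRep_apply, ← smul_eq_mul (counit x), TensorProduct.tmul_smul, map_smul] at this
    simpa using this⟩
  invFun T := ⟨T.1 ∘ₗ (TensorProduct.rid k H).toLinearMap, fun h x c ↦ by
    simp [T.2 h x]; ring⟩
  map_add' _ _ := rfl
  map_smul' _ _ := rfl
  left_inv T := by ext; simp
  right_inv T := by ext; simp

/-- Balanced forms for the regular representation are linear forms on `H`. -/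
noncomputable def balancedFormsRegularEquiv [Algebra k K] [Algebra k H] (i : K →ₐ[k] H) :
    balancedForms i (Algebra.lsmul k k K) ≃ₗ[k] Module.Dual k H where
  toFun T := T.1 ∘ₗ (TensorProduct.mk k H K).flip 1
  invFun T := ⟨T ∘ₗ LinearMap.mul' k H ∘ₗ i.toLinearMap.lTensor H, fun h x y ↦ by
    simp [mul_assoc]⟩
  map_add' _ _ := rfl
  map_smul' _ _ := rfl
  left_inv T := Subtype.ext <| TensorProduct.ext' fun h x ↦ by simpa using T.2 h x 1
  right_inv T := by ext; simp

end Coinvariants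

variable [HopfAlgebra k K] [HopfAlgebra k H] [FiniteDimensional k H] {i : K →ₐc[k] H}

lemma Attains.trivRep [FiniteDimensional k K] (hi : Function.Injective i) {p d : ℕ}
    (hb : RatioBound (i : K →ₐ[k] H) p d) {V : Type*} [AddCommGroup V] [Module k V]
    [FiniteDimensional k V] [Nontrivial V] {ρ : K →ₐ[k] Module.End k V}
    (h : Attains (i : K →ₐ[k] H) p d ρ) : Attains (i : K →ₐ[k] H) p d (trivRep k K) := by
  have h₁ := h.tensorRep i hb (Algebra.lsmul k k (H ⊗[k] Module.Dual k V))
  have h₂ := h₁.of_injective hb (Intertwines.lTensor ρ (intertwines_rTensor (i : K →ₐ[k] H)))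
    (Module.Flat.lTensor_preserves_injective_linearMap _
      (Module.Flat.rTensor_preserves_injective_linearMap _ hi))
  have h₃ := h₂.of_surjective hb (Intertwines.lTensor ρ (intertwines_actionMap (dualRep ρ)))
    (LinearMap.lTensor_surjective _ (actionMap_surjective _))
  refine h₃.of_injective hb (intertwines_coevaluation ρ) ?_
  rw [← LinearMap.ker_eq_bot]
  exact LinearMap.ker_toSpanSingleton _ (by simp)

lemma Attains.lsmul [FiniteDimensional k K] (hi : Function.Injective i) {p d : ℕ}
    (hb : RatioBound (i : K →ₐ[k] H) p d)
    (h : Attains (i : K →ₐ[k] H) p d (_root_.trivRep k K)) :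
    Attains (i : K →ₐ[k] H) p d (Algebra.lsmul k k K) := by
  refine (h.tensorRep i hb (Algebra.lsmul k k H)).of_injective hb
    (f := (TensorProduct.lid k H).symm.toLinearMap ∘ₗ (i : K →ₐ[k] H).toLinearMap) ?_
    ((TensorProduct.lid k H).symm.injective.comp hi)
  intro x y
  have h := congr((LinearMap.mulRight k (i y) ∘ₗ (i : K →ₐ[k] H).toLinearMap).lTensor k
    $(sum_counit_tmul_eq (R := k) (ℛ k x)))
  simp only [map_sum, LinearMap.lTensor_tmul] at h
  simpa [tensorRep_tmul _ _ x (ℛ k x)] using h.symm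

/-- A finite-dimensional Hopf algebra is, dimensionwise, free over each Hopf subalgebra. -/
theorem finrank_eq_finrank_mul_finrank_invariantForms (hi : Function.Injective i) :
    Module.finrank k H =
      Module.finrank k K * Module.finrank k (invariantForms (i : K →ₐ[k] H)) := by
  have : FiniteDimensional k K := .of_injective (i : K →ₐ[k] H).toLinearMap hi
  obtain ⟨d, p, ρ, hd, hb, hρ⟩ :=
    exists_ratioBound_attains (i : K →ₐ[k] H) (Bialgebra.counitAlgHom k K)
  have : Nonempty (Fin d) := ⟨⟨0, hd⟩⟩
  have htriv := hρ.trivRep hi hb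
  have hreg := htriv.lsmul hi hb
  rw [Attains, (balancedFormsTrivEquiv _).finrank_eq, Module.finrank_self, mul_one] at htriv
  rw [Attains, (balancedFormsRegularEquiv _).finrank_eq, Subspace.dual_finrank_eq, ← htriv]
    at hreg
  exact Nat.eq_of_mul_eq_mul_right hd (by rw [hreg]; ring)

end NicholsZoeller

section DualHopfAlgebra

set_option maxSynthPendingDepth 3

open Coalgebra HopfAlgebra

/-- The dual space of a coalgebra, with the convolution product. -/
abbrev ConvDual (k Q : Type*) [Field k] [AddCommGroup Q] [Module k Q] : Type _ :=
  WithConv (Q →ₗ[k] k)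

namespace ConvDual

variable {k Q : Type*} [Field k] [Ring Q]

section Contraction

variable [Algebra k Q] {M : Type*} [AddCommGroup M] [Module k M]

/-- Evaluation at the unit. -/
noncomputable def counitMap : ConvDual k Q →ₗ[k] k :=
  LinearMap.applyₗ (1 : Q) ∘ₗ (WithConv.linearEquiv k (Q →ₗ[k] k)).toLinearMap

@[simp]
lemma counitMap_apply (f : ConvDual k Q) : counitMap f = f 1 := rfl

variable [FiniteDimensional k Q]

/-- Contracting the first tensor factor against elements of `Q`. -/
noncomputable def contract : ConvDual k Q ⊗[k] M ≃ₗ[k] (Q →ₗ[k] M) :=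
  TensorProduct.congr (WithConv.linearEquiv k (Q →ₗ[k] k)) (.refl k M) ≪≫ₗ
    dualTensorHomEquiv k Q M

@[simp]
lemma contract_tmul (f : ConvDual k Q) (m : M) (a : Q) : contract (f ⊗ₜ m) a = f a • m := by
  simp [contract, dualTensorHom_apply]

/-- The transpose of the multiplication. -/
noncomputable def comulMap : ConvDual k Q →ₗ[k] ConvDual k Q ⊗[k] ConvDual k Q :=
  contract.symm.toLinearMap ∘ₗ
    { toFun f :=
        { toFun a := .toConv (f.ofConv ∘ₗ LinearMap.mulLeft k a)
          map_add' a b := by ext; simp [add_mul]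
          map_smul' c a := by ext; simp }
      map_add' f g := by ext; simp
      map_smul' c f := by ext; simp }

@[simp]
lemma contract_comulMap (f : ConvDual k Q) (a b : Q) : contract (comulMap f) a b = f (a * b) := by
  simp [comulMap]

lemma contract_contract_assoc_tmul (u : ConvDual k Q ⊗[k] ConvDual k Q) (m : M) (a b : Q) :
    contract (contract (TensorProduct.assoc k _ _ _ (u ⊗ₜ m)) a) b = contract u a b • m := by
  induction u with
  | zero => simp
  | add u v hu hv => simp [TensorProduct.add_tmul, add_smul, hu, hv]
  | tmul f g => simp [smul_smul]

lemma contract_contract_assoc_rTensor (s : ConvDual k Q ⊗[k] M) (a b : Q) :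
    contract (contract (TensorProduct.assoc k _ _ _ (comulMap.rTensor M s)) a) b =
      contract s (a * b) := by
  induction s with
  | zero => simp
  | add u v hu hv => simp [hu, hv]
  | tmul f g => simp [contract_contract_assoc_tmul]

lemma contract_lTensor {N : Type*} [AddCommGroup N] [Module k N] (φ : M →ₗ[k] N)
    (s : ConvDual k Q ⊗[k] M) (a : Q) : contract (φ.lTensor _ s) a = φ (contract s a) := by
  induction s with
  | zero => simp
  | add u v hu hv => simp [hu, hv]
  | tmul f g => simp

lemma lid_rTensor_counitMap (s : ConvDual k Q ⊗[k] M) :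
    TensorProduct.lid k M (counitMap.rTensor M s) = contract s 1 := by
  induction s with
  | zero => simp
  | add u v hu hv => simp only [map_add, hu, hv, LinearMap.add_apply]
  | tmul f g => simp

lemma rid_lTensor_apply (φ : M →ₗ[k] k) (s : ConvDual k Q ⊗[k] M) (a : Q) :
    TensorProduct.rid k _ (φ.lTensor _ s) a = φ (contract s a) := by
  induction s with
  | zero => simp
  | add u v hu hv => simp only [map_add, hu, hv, LinearMap.add_apply, WithConv.ofConv_add]
  | tmul f g => simp [mul_comm]

noncomputable instance : Coalgebra k (ConvDual k Q) where
  comul := comulMap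
  counit := counitMap
  coassoc := by
    ext f : 1
    apply contract.injective
    ext a : 1
    apply contract.injective
    ext b c
    simp [contract_contract_assoc_rTensor, contract_lTensor, mul_assoc]
  rTensor_counit_comp_comul := by
    ext f : 1
    apply (TensorProduct.lid k _).injective
    ext a
    simp [lid_rTensor_counitMap]
  lTensor_counit_comp_comul := by
    ext f : 1
    apply (TensorProduct.rid k _).injective
    ext a
    simp [rid_lTensor_apply]

@[simp]
lemma contract_comul (f : ConvDual k Q) (a b : Q) :
    contract (comul (R := k) f) a b = f (a * b) := contract_comulMap f a b

@[simp]
lemma counit_apply (f : ConvDual k Q) : counit (R := k) f = f 1 := rfl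

end Contraction

section Bialgebra

variable [Bialgebra k Q] [FiniteDimensional k Q]

lemma contract_mul (s t : ConvDual k Q ⊗[k] ConvDual k Q) {a b : Q} {ι κ : Type*}
    (ra : Coalgebra.Repr k a ι) (rb : Coalgebra.Repr k b κ) :
    contract (s * t) a b = ∑ j ∈ ra.index, ∑ l ∈ rb.index,
      contract s (ra.left j) (rb.left l) * contract t (ra.right j) (rb.right l) := by
  induction s with
  | zero => simp
  | add u v hu hv => simp [add_mul, hu, hv, Finset.sum_add_distrib]
  | tmul f g =>
    induction t with
    | zero => simp
    | add u v hu hv => simp [mul_add, hu, hv, Finset.sum_add_distrib]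
    | tmul f' g' =>
      simp only [Algebra.TensorProduct.tmul_mul_tmul, contract_tmul, WithConv.ofConv_smul,
        LinearMap.smul_apply, ra.convMul_apply, rb.convMul_apply, smul_eq_mul, Finset.sum_mul_sum]
      exact Finset.sum_congr rfl fun _ _ ↦ Finset.sum_congr rfl fun _ _ ↦ by ring

lemma convMul_apply_mul (f g : ConvDual k Q) (a b : Q) :
    contract (M := ConvDual k Q) (comul (R := k) (f * g)) a b =
      contract (M := ConvDual k Q) (comul (R := k) f * comul (R := k) g) a b := by
  rw [contract_mul _ _ (ℛ k a) (ℛ k b), contract_comul,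
    ((ℛ k a).mul (ℛ k b)).convMul_apply]
  simp [Finset.sum_product]

noncomputable instance : Bialgebra k (ConvDual k Q) :=
  .mk' k _ (by simp) (fun {f g} ↦ by simp [Algebra.TensorProduct.one_def])
    (contract.injective (by ext; simp [Algebra.TensorProduct.one_def]))
    (fun {f g} ↦ contract.injective
      (LinearMap.ext fun a ↦ WithConv.ext (LinearMap.ext (convMul_apply_mul f g a))))

end Bialgebra

section HopfAlgebra

variable [HopfAlgebra k Q]

/-- The transpose of the antipode. -/
noncomputable def antipodeMap : ConvDual k Q →ₗ[k] ConvDual k Q where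
  toFun f := .toConv (f.ofConv ∘ₗ antipode k)
  map_add' _ _ := rfl
  map_smul' _ _ := rfl

@[simp]
lemma antipodeMap_apply (f : ConvDual k Q) (a : Q) : antipodeMap f a = f (antipode k a) := rfl

variable [FiniteDimensional k Q]

lemma mul'_map_apply (φ ψ : ConvDual k Q →ₗ[k] ConvDual k Q) (φ' ψ' : Q →ₗ[k] Q)
    (hφ : ∀ f a, φ f a = f (φ' a)) (hψ : ∀ f a, ψ f a = f (ψ' a))
    (s : ConvDual k Q ⊗[k] ConvDual k Q) {a : Q} {ι : Type*} (r : Coalgebra.Repr k a ι) :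
    LinearMap.mul' k _ (TensorProduct.map φ ψ s) a =
      ∑ j ∈ r.index, contract s (φ' (r.left j)) (ψ' (r.right j)) := by
  induction s with
  | zero => simp
  | add u v hu hv =>
    simp only [map_add, hu, hv, LinearMap.add_apply, WithConv.ofConv_add, Finset.sum_add_distrib]
  | tmul f g =>
    rw [TensorProduct.map_tmul, LinearMap.mul'_apply, r.convMul_apply]
    simp [hφ, hψ]

noncomputable instance : HopfAlgebra k (ConvDual k Q) where
  antipode := antipodeMap
  mul_antipode_rTensor_comul := by
    ext f a
    have h := congr(f $(sum_antipode_mul_eq_algebraMap_counit (R := k) (ℛ k a)))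
    have h' := mul'_map_apply antipodeMap .id (antipode k) .id (fun _ _ ↦ rfl) (fun _ _ ↦ rfl)
      (comul (R := k) f) (ℛ k a)
    simp only [contract_comul, LinearMap.id_apply, ← map_sum, h] at h'
    simpa [LinearMap.rTensor, Algebra.algebraMap_eq_smul_one, mul_comm] using h'
  mul_antipode_lTensor_comul := by
    ext f a
    have h := congr(f $(sum_mul_antipode_eq_algebraMap_counit (R := k) (ℛ k a)))
    have h' := mul'_map_apply .id antipodeMap .id (antipode k) (fun _ _ ↦ rfl) (fun _ _ ↦ rfl)
      (comul (R := k) f) (ℛ k a)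
    simp only [contract_comul, LinearMap.id_apply, ← map_sum, h] at h'
    simpa [LinearMap.lTensor, Algebra.algebraMap_eq_smul_one, mul_comm] using h'

end HopfAlgebra

section Transpose

variable {Q' : Type*} [Ring Q'] [Bialgebra k Q] [Bialgebra k Q']

/-- The transpose of a morphism of bialgebras, as a linear map. -/
noncomputable def transposeLinear (p : Q →ₐc[k] Q') : ConvDual k Q' →ₗ[k] ConvDual k Q where
  toFun f := .toConv (f.ofConv ∘ₗ (p : Q →ₗc[k] Q').toLinearMap)
  map_add' _ _ := rfl
  map_smul' _ _ := rfl

@[simp]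
lemma transposeLinear_apply (p : Q →ₐc[k] Q') (f : ConvDual k Q') (a : Q) :
    transposeLinear p f a = f (p a) := rfl

variable [FiniteDimensional k Q] [FiniteDimensional k Q']

lemma contract_map_transposeLinear (p : Q →ₐc[k] Q') (s : ConvDual k Q' ⊗[k] ConvDual k Q')
    (a b : Q) : contract (TensorProduct.map (transposeLinear p) (transposeLinear p) s) a b =
      contract s (p a) (p b) := by
  induction s with
  | zero => simp
  | add u v hu hv => simp [hu, hv]
  | tmul f g => simp

/-- The transpose of a morphism of bialgebras. -/
noncomputable def transpose (p : Q →ₐc[k] Q') : ConvDual k Q' →ₐc[k] ConvDual k Q :=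
  .ofAlgHom
    (.ofLinearMap (transposeLinear p) (by ext; simp)
      (fun f g ↦ WithConv.ext (LinearMap.convMul_comp_coalgHom_distrib f g (p : Q →ₗc[k] Q'))))
    (by ext; simp)
    (by
      ext f
      apply contract.injective
      ext a b
      refine (contract_map_transposeLinear p (comul f) a b).trans ?_
      simp)

lemma transpose_injective {p : Q →ₐc[k] Q'} (hp : Function.Surjective p) :
    Function.Injective (transpose p) := by
  intro f g h
  ext b
  obtain ⟨a, rfl⟩ := hp b
  exact congr($h a)

end Transpose

end ConvDual

/-- The dimension of a quotient Hopf algebra divides the dimension. -/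
theorem finrank_dvd_finrank_of_surjective {k Q Q' : Type*} [Field k] [Ring Q] [Ring Q']
    [HopfAlgebra k Q] [HopfAlgebra k Q'] [FiniteDimensional k Q] [FiniteDimensional k Q']
    {p : Q →ₐc[k] Q'} (hp : Function.Surjective p) :
    Module.finrank k Q' ∣ Module.finrank k Q := by
  have : FiniteDimensional k (ConvDual k Q) := .of_surjective
    (WithConv.linearEquiv k (Q →ₗ[k] k)).symm.toLinearMap (LinearEquiv.surjective _)
  have h := finrank_eq_finrank_mul_finrank_invariantForms (ConvDual.transpose_injective hp)
  rw [(WithConv.linearEquiv k (Q →ₗ[k] k)).finrank_eq,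
    (WithConv.linearEquiv k (Q' →ₗ[k] k)).finrank_eq, Subspace.dual_finrank_eq,
    Subspace.dual_finrank_eq] at h
  exact ⟨_, h⟩

end DualHopfAlgebra

section HopfSubalgebra

set_option maxSynthPendingDepth 3

open Coalgebra HopfAlgebra

variable {k H : Type*} [Field k] [Ring H] [HopfAlgebra k H] {K : Subalgebra k H}

lemma Subalgebra.map_val_val_injective :
    Function.Injective (Algebra.TensorProduct.map K.val K.val) :=
  TensorProduct.map_injective_of_flat_flat _ _ Subtype.val_injective Subtype.val_injective

namespace IsHopfSubalgebra

/-- The comultiplication of a Hopf subalgebra. -/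
noncomputable def comulAlgHom (hK : IsHopfSubalgebra k K) : K →ₐ[k] K ⊗[k] K :=
  (AlgEquiv.ofInjective _ K.map_val_val_injective).symm.toAlgHom.comp
    (((Bialgebra.comulAlgHom k H).comp K.val).codRestrict _ fun x ↦ hK.1 x x.2)

lemma map_val_val_comulAlgHom (hK : IsHopfSubalgebra k K) (x : K) :
    Algebra.TensorProduct.map K.val K.val (hK.comulAlgHom x) = comul (R := k) (x : H) := by
  have h := AlgEquiv.apply_symm_apply (AlgEquiv.ofInjective _ K.map_val_val_injective)
    ((((Bialgebra.comulAlgHom k H).comp K.val).codRestrict _ fun x ↦ hK.1 x x.2) x)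
  exact congr(($h : H ⊗[k] H))

/-- A Hopf subalgebra is a bialgebra. -/
noncomputable abbrev bialgebra (hK : IsHopfSubalgebra k K) : Bialgebra k K :=
  .ofAlgHom hK.comulAlgHom ((Bialgebra.counitAlgHom k H).comp K.val)
    (by
      ext x
      have hinj : Function.Injective
          (Algebra.TensorProduct.map K.val (Algebra.TensorProduct.map K.val K.val)) :=
        TensorProduct.map_injective_of_flat_flat _ _ Subtype.val_injective
          K.map_val_val_injective
      apply hinj
      have hl (s : K ⊗[k] K) :
          Algebra.TensorProduct.map K.val (Algebra.TensorProduct.map K.val K.val)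
            (TensorProduct.assoc k K K K
              (Algebra.TensorProduct.map hK.comulAlgHom (.id k K) s)) =
          TensorProduct.assoc k H H H
            (comul.rTensor H (Algebra.TensorProduct.map K.val K.val s)) := by
        induction s with
        | zero => simp
        | add s t hs ht => simp only [map_add, hs, ht]
        | tmul x y =>
          simp only [Algebra.TensorProduct.map_tmul, LinearMap.rTensor_tmul, AlgHom.coe_id, id,
            Subalgebra.coe_val, ← hK.map_val_val_comulAlgHom x]
          generalize hK.comulAlgHom x = s
          induction s with
          | zero => simp
          | add s t hs ht => simp only [map_add, hs, ht, TensorProduct.add_tmul]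
          | tmul x z => simp
      have hr (s : K ⊗[k] K) :
          Algebra.TensorProduct.map K.val (Algebra.TensorProduct.map K.val K.val)
            (Algebra.TensorProduct.map (.id k K) hK.comulAlgHom s) =
          comul.lTensor H (Algebra.TensorProduct.map K.val K.val s) := by
        induction s with
        | zero => simp
        | add s t hs ht => simp only [map_add, hs, ht]
        | tmul x y => simp [hK.map_val_val_comulAlgHom]
      refine (hl _).trans (Eq.trans ?_ (hr _).symm)
      simp [hK.map_val_val_comulAlgHom])
    (by
      ext x
      apply (TensorProduct.lid k K).injective
      apply Subtype.val_injective
      have h (s : K ⊗[k] K) : (TensorProduct.lid k K (Algebra.TensorProduct.map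
          ((Bialgebra.counitAlgHom k H).comp K.val) (.id k K) s) : H) =
          TensorProduct.lid k H (counit.rTensor H (Algebra.TensorProduct.map K.val K.val s)) := by
        induction s with
        | zero => simp
        | add s t hs ht => simp only [map_add, hs, ht, Subalgebra.coe_add]
        | tmul x y => simp
      refine (h _).trans ?_
      simp [hK.map_val_val_comulAlgHom])
    (by
      ext x
      apply (TensorProduct.rid k K).injective
      apply Subtype.val_injective
      have h (s : K ⊗[k] K) : (TensorProduct.rid k K (Algebra.TensorProduct.map
          (.id k K) ((Bialgebra.counitAlgHom k H).comp K.val) s) : H) =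
          TensorProduct.rid k H (counit.lTensor H (Algebra.TensorProduct.map K.val K.val s)) := by
        induction s with
        | zero => simp
        | add s t hs ht => simp only [map_add, hs, ht, Subalgebra.coe_add]
        | tmul x y => simp
      refine (h _).trans ?_
      simp [hK.map_val_val_comulAlgHom])

/-- The antipode of a Hopf subalgebra. -/
noncomputable def antipodeMap (hK : IsHopfSubalgebra k K) : K →ₗ[k] K :=
  (antipode k (A := H)).restrict (p := Subalgebra.toSubmodule K) (q := Subalgebra.toSubmodule K)
    hK.2

@[simp]
lemma coe_antipodeMap (hK : IsHopfSubalgebra k K) (x : K) :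
    (hK.antipodeMap x : H) = antipode k (x : H) := rfl

/-- A Hopf subalgebra is a Hopf algebra. -/
noncomputable abbrev hopfAlgebra (hK : IsHopfSubalgebra k K) : HopfAlgebra k K where
  __ := hK.bialgebra
  antipode := hK.antipodeMap
  mul_antipode_rTensor_comul := by
    ext x
    have h (s : K ⊗[k] K) : (LinearMap.mul' k K (hK.antipodeMap.rTensor K s) : H) =
        LinearMap.mul' k H ((antipode k).rTensor H (Algebra.TensorProduct.map K.val K.val s)) := by
      induction s with
      | zero => simp
      | add s t hs ht => simp only [map_add, hs, ht, Subalgebra.coe_add]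
      | tmul x y => simp
    refine (h _).trans ?_
    refine (congr(LinearMap.mul' k H ((antipode k).rTensor H
      $(hK.map_val_val_comulAlgHom x)))).trans ?_
    exact mul_antipode_rTensor_comul_apply _
  mul_antipode_lTensor_comul := by
    ext x
    have h (s : K ⊗[k] K) : (LinearMap.mul' k K (hK.antipodeMap.lTensor K s) : H) =
        LinearMap.mul' k H ((antipode k).lTensor H (Algebra.TensorProduct.map K.val K.val s)) := by
      induction s with
      | zero => simp
      | add s t hs ht => simp only [map_add, hs, ht, Subalgebra.coe_add]
      | tmul x y => simp
    refine (h _).trans ?_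
    refine (congr(LinearMap.mul' k H ((antipode k).lTensor H
      $(hK.map_val_val_comulAlgHom x)))).trans ?_
    exact mul_antipode_lTensor_comul_apply _

/-- The linear forms on `H` that are invariant under right multiplication by `K`. -/
def rightInvariantForms (K : Subalgebra k H) : Submodule k (Module.Dual k H) where
  carrier := {T | ∀ h, ∀ x ∈ K, T (h * x) = counit (R := k) x * T h}
  add_mem' hT hT' h x hx := by simp [hT h x hx, hT' h x hx, mul_add]
  zero_mem' := by simp
  smul_mem' c T hT h x hx := by simp [hT h x hx, mul_left_comm]

theorem finrank_eq_finrank_mul_finrank_rightInvariantForms [FiniteDimensional k H]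
    (hK : IsHopfSubalgebra k K) :
    Module.finrank k H = Module.finrank k K * Module.finrank k (rightInvariantForms K) := by
  let := hK.hopfAlgebra
  let i : K →ₐc[k] H := .ofAlgHom K.val rfl
    (AlgHom.ext fun x ↦ hK.map_val_val_comulAlgHom x)
  have h : invariantForms (i : K →ₐ[k] H) = rightInvariantForms K :=
    Submodule.ext fun T ↦ ⟨fun hT h x hx ↦ hT h ⟨x, hx⟩, fun hT h x ↦ hT h x x.2⟩
  rw [← h, finrank_eq_finrank_mul_finrank_invariantForms (i := i) Subtype.val_injective]

end IsHopfSubalgebra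

end HopfSubalgebra

section AugmentationIdeal

set_option maxSynthPendingDepth 3

open Coalgebra HopfAlgebra

variable {k H : Type*} [Field k] [Ring H] [HopfAlgebra k H] {K : Subalgebra k H}

lemma adjR_tmul {h : H} {ι : Type*} (r : Coalgebra.Repr k h ι) (x : H) :
    adjR k H (h ⊗ₜ x) = ∑ j ∈ r.index, antipode k (r.left j) * (x * r.right j) := by
  simp [adjR, ← r.eq, TensorProduct.sum_tmul]

lemma counit_adjR_tmul (h x : H) :
    counit (R := k) (adjR k H (h ⊗ₜ x)) = counit (R := k) h * counit (R := k) x := by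
  have h' := congr(counit (R := k) $(sum_counit_smul (R := k) (ℛ k h)))
  simp only [map_sum, map_smul, smul_eq_mul] at h'
  rw [adjR_tmul (ℛ k h), ← h', map_sum, Finset.sum_mul]
  refine Finset.sum_congr rfl fun j _ ↦ ?_
  simp only [Bialgebra.counit_mul, counit_antipode]
  ring

lemma mul_eq_sum_mul_adjR {h : H} {ι : Type*} (r : Coalgebra.Repr k h ι) (x : H) :
    x * h = ∑ j ∈ r.index, r.left j * adjR k H (r.right j ⊗ₜ x) := by
  let φ : H ⊗[k] (H ⊗[k] H) →ₗ[k] H :=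
    LinearMap.mul' k H ∘ₗ LinearMap.lTensor H (LinearMap.mul' k H ∘ₗ
      TensorProduct.map (antipode k) (LinearMap.mulLeft k x))
  have h₁ (s : H ⊗[k] H) : φ (comul.lTensor H s) =
      LinearMap.mul' k H ((adjR k H ∘ₗ (TensorProduct.mk k H H).flip x).lTensor H s) := by
    induction s with
    | zero => simp
    | add s t hs ht => simp only [map_add, hs, ht]
    | tmul a b =>
      simp [φ, adjR_tmul (ℛ k b), ← (ℛ k b).eq, TensorProduct.tmul_sum]
  have h₂ (s : H ⊗[k] H) (b : H) : φ (TensorProduct.assoc k H H H (s ⊗ₜ b)) =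
      LinearMap.mul' k H ((antipode k).lTensor H s) * (x * b) := by
    induction s with
    | zero => simp
    | add s t hs ht => simp only [TensorProduct.add_tmul, map_add, hs, ht, add_mul]
    | tmul a c => simp [φ, mul_assoc]
  have h₃ := h₁ (comul (R := k) h)
  rw [← coassoc_apply, ← r.eq] at h₃
  simp only [map_sum, LinearMap.rTensor_tmul, LinearMap.lTensor_tmul, h₂,
    mul_antipode_lTensor_comul_apply] at h₃
  have h₄ := congr(x * $(sum_counit_smul (R := k) r))
  rw [← h₄]
  simpa [Finset.mul_sum, Algebra.algebraMap_eq_smul_one] using h₃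

variable (k K) in
/-- The two-sided ideal of `H` generated by the augmentation ideal of `K`. -/
abbrev augmentationSpan : TwoSidedIdeal H :=
  TwoSidedIdeal.span {x : H | x ∈ K ∧ counit (R := k) x = 0}

lemma sub_counit_smul_one_mem_augmentationSpan {x : H} (hx : x ∈ K) :
    x - counit (R := k) x • 1 ∈ augmentationSpan k K :=
  TwoSidedIdeal.subset_span ⟨sub_mem hx (K.smul_mem K.one_mem _), by simp⟩

lemma IsNormalHopfSubalgebra.rightInvariantForms_eq (hK : IsNormalHopfSubalgebra k K) :
    IsHopfSubalgebra.rightInvariantForms K =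
      ((augmentationSpan k K).asIdeal.restrictScalars k).dualAnnihilator := by
  ext T
  rw [Submodule.mem_dualAnnihilator]
  constructor
  · intro hT y hy
    rw [Submodule.restrictScalars_mem, TwoSidedIdeal.mem_asIdeal,
      TwoSidedIdeal.mem_span_iff_mem_addSubgroup_closure] at hy
    induction hy using AddSubgroup.closure_induction with
    | zero => simp
    | add a b _ _ ha hb => rw [map_add, ha, hb, add_zero]
    | neg a _ ha => rw [map_neg, ha, neg_zero]
    | mem y hy =>
      obtain ⟨_, ⟨a, -, x, ⟨hx, hx'⟩, rfl⟩, b, -, rfl⟩ := hy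
      simp only [mul_assoc, mul_eq_sum_mul_adjR (ℛ k b) x, Finset.mul_sum, map_sum]
      refine Finset.sum_eq_zero fun j _ ↦ ?_
      rw [← mul_assoc, hT _ _ (hK _ _ hx).2, counit_adjR_tmul, hx', mul_zero, zero_mul]
  · intro hT h x hx
    have h' := hT (h * (x - counit (R := k) x • 1))
      ((augmentationSpan k K).mul_mem_left _ _ (sub_counit_smul_one_mem_augmentationSpan hx))
    simpa [mul_sub, sub_eq_zero] using h'

theorem IsHopfSubalgebra.finrank_eq_mul_finrank_quotient [FiniteDimensional k H]
    (hK : IsHopfSubalgebra k K) (hKn : IsNormalHopfSubalgebra k K) :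
    Module.finrank k H =
      Module.finrank k K * Module.finrank k (H ⧸ (augmentationSpan k K).asIdeal) := by
  rw [hK.finrank_eq_finrank_mul_finrank_rightInvariantForms, hKn.rightInvariantForms_eq,
    ← (Submodule.dualQuotEquivDualAnnihilator _).finrank_eq, Subspace.dual_finrank_eq]
  rfl

theorem IsHopfSubalgebra.isHopfIdeal (hK : IsHopfSubalgebra k K) :
    (augmentationSpan k K).asIdeal.IsHopfIdeal k where
  counit_eq_zero x hx := by
    have h : augmentationSpan k K ≤ TwoSidedIdeal.ker (Bialgebra.counitAlgHom k H) :=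
      TwoSidedIdeal.span_le.2 fun x hx ↦ (TwoSidedIdeal.mem_ker _).2 hx.2
    exact (TwoSidedIdeal.mem_ker (Bialgebra.counitAlgHom k H)).1 (h hx)
  map_mkQ_comul_eq_zero x hx := by
    let q := Ideal.Quotient.mkₐ k (augmentationSpan k K).asIdeal
    have hq {y : H} (hy : y ∈ K) : q y = counit (R := k) y • 1 := by
      rw [← map_one q, ← map_smul]
      exact (Ideal.Quotient.mk_eq_mk_iff_sub_mem _ _).2
        (sub_counit_smul_one_mem_augmentationSpan hy)
    have hs (s : K ⊗[k] K) : TensorProduct.map q.toLinearMap q.toLinearMap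
        (Algebra.TensorProduct.map K.val K.val s) = TensorProduct.map
          (Algebra.linearMap k _ ∘ₗ counit) (Algebra.linearMap k _ ∘ₗ counit)
          (Algebra.TensorProduct.map K.val K.val s) := by
      induction s with
      | zero => simp
      | add s t hs ht => simp only [map_add, hs, ht]
      | tmul x y => simp [hq, Algebra.algebraMap_eq_smul_one]
    have h : augmentationSpan k K ≤ TwoSidedIdeal.ker
        ((Algebra.TensorProduct.map q q).comp (Bialgebra.comulAlgHom k H)) := by
      refine TwoSidedIdeal.span_le.2 fun x ⟨hx, hx'⟩ ↦ (TwoSidedIdeal.mem_ker _).2 ?_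
      have h := hs (hK.comulAlgHom ⟨x, hx⟩)
      rw [hK.map_val_val_comulAlgHom] at h
      refine h.trans ?_
      have h' : counit.lTensor H (comul (R := k) x) = x ⊗ₜ 1 := by simp
      have h'' := congr(TensorProduct.map (Algebra.linearMap k (H ⧸ (augmentationSpan k K).asIdeal)
        ∘ₗ counit) (Algebra.linearMap k (H ⧸ (augmentationSpan k K).asIdeal)) $h')
      rw [LinearMap.lTensor, ← LinearMap.comp_apply, ← TensorProduct.map_comp] at h''
      simpa [hx'] using h''
    exact (TwoSidedIdeal.mem_ker _).1 (h hx)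
  antipode_mem x hx := by
    rw [TwoSidedIdeal.mem_asIdeal, TwoSidedIdeal.mem_span_iff_mem_addSubgroup_closure] at hx
    induction hx using AddSubgroup.closure_induction with
    | zero => simp
    | add a b _ _ ha hb => rw [map_add]; exact add_mem ha hb
    | neg a _ ha => rw [map_neg]; exact neg_mem ha
    | mem y hy =>
      obtain ⟨_, ⟨a, -, x, ⟨hx, hx'⟩, rfl⟩, b, -, rfl⟩ := hy
      simp only [antipode_mul_antidistrib]
      refine TwoSidedIdeal.mul_mem_left _ _ _ (TwoSidedIdeal.mul_mem_right _ _ _ ?_)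
      exact TwoSidedIdeal.subset_span ⟨hK.2 x hx, by simpa using hx'⟩

variable {H' : Type*} [Ring H'] [HopfAlgebra k H'] {Z : Subalgebra k H'}

lemma augmentationSpan_le_comap {π : H →ₐc[k] H'} (h : K.map (π : H →ₐ[k] H') ≤ Z) :
    augmentationSpan k K ≤ (augmentationSpan k Z).comap (π : H →ₐ[k] H') :=
  TwoSidedIdeal.span_le.2 fun x hx ↦ (TwoSidedIdeal.mem_comap _).2 <|
    TwoSidedIdeal.subset_span ⟨h ⟨x, hx.1, rfl⟩, (CoalgHomClass.counit_comp_apply π x).trans hx.2⟩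

theorem exists_surjective_bialgHom_quotient {π : H →ₐc[k] H'} (hπ : Function.Surjective π)
    (I : Ideal H) [I.IsTwoSided] [I.IsHopfIdeal k] (J : Ideal H') [J.IsTwoSided] [J.IsHopfIdeal k]
    (hIJ : ∀ x ∈ I, π x ∈ J) : ∃ p : H ⧸ I →ₐc[k] H' ⧸ J, Function.Surjective p := by
  let q : H →ₐc[k] H' ⧸ J := (Bialgebra.Quotient.mkBialgHom J).comp π
  let f : H ⧸ I →ₐ[k] H' ⧸ J := Ideal.Quotient.liftₐ I (q : H →ₐ[k] H' ⧸ J)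
    fun x hx ↦ Ideal.Quotient.eq_zero_iff_mem.2 (hIJ x hx)
  refine ⟨.ofAlgHom f ?_ ?_, ?_⟩
  · refine Ideal.Quotient.algHom_ext k (AlgHom.ext fun x ↦ ?_)
    exact CoalgHomClass.counit_comp_apply q x
  · refine Ideal.Quotient.algHom_ext k (AlgHom.ext fun x ↦ ?_)
    refine Eq.trans ?_ (CoalgHomClass.map_comp_comul_apply q x)
    change TensorProduct.map f.toLinearMap f.toLinearMap (TensorProduct.map
      (Ideal.Quotient.mkₐ k I).toLinearMap (Ideal.Quotient.mkₐ k I).toLinearMap (comul x)) = _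
    rw [← LinearMap.comp_apply, ← TensorProduct.map_comp]
    rfl
  · intro y
    obtain ⟨y, rfl⟩ := Ideal.Quotient.mk_surjective y
    obtain ⟨x, rfl⟩ := hπ y
    exact ⟨Ideal.Quotient.mk I x, rfl⟩

end AugmentationIdeal

/-- If `π : H → H̄` is a surjective Hopf algebra map, `K` a normal Hopf subalgebra of `H` with
`π(K)` contained in a central normal Hopf subalgebra `Z̄` of `H̄`, then there is a surjective
algebra map `H/HK⁺ → H̄/H̄Z̄⁺` induced by `π`, and `dim H̄ / dim Z̄` divides `dim H / dim K`. -/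
theorem stmt_17 (k H H' : Type*) [Field k]
    [Ring H] [HopfAlgebra k H] [FiniteDimensional k H]
    [Ring H'] [HopfAlgebra k H'] [FiniteDimensional k H']
    (π : H →ₐc[k] H') (hπ : Function.Surjective π)
    (K : Subalgebra k H) (hK : IsHopfSubalgebra k K) (hKnorm : IsNormalHopfSubalgebra k K)
    (Z : Subalgebra k H') (hZ : IsHopfSubalgebra k Z) (hZnorm : IsNormalHopfSubalgebra k Z)
    (hZcentral : Z ≤ Subalgebra.center k H')
    (hπK : K.map (π : H →ₐ[k] H') ≤ Z) :
    let IK : TwoSidedIdeal H :=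
      TwoSidedIdeal.span {x : H | x ∈ K ∧ Coalgebra.counit (R := k) x = 0}
    let IZ : TwoSidedIdeal H' :=
      TwoSidedIdeal.span {x : H' | x ∈ Z ∧ Coalgebra.counit (R := k) x = 0}
    (∃ f : IK.ringCon.Quotient →ₐ[k] IZ.ringCon.Quotient,
      Function.Surjective f ∧
        ∀ h : H, f (IK.ringCon.mk' h) = IZ.ringCon.mk' (π h)) ∧
      Module.finrank k H' / Module.finrank k Z ∣ Module.finrank k H / Module.finrank k K := by
  intro IK IZ
  have hle : IK ≤ IZ.comap (π : H →ₐ[k] H') := augmentationSpan_le_comap hπK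
  constructor
  · let q : H →ₐ[k] IZ.ringCon.Quotient := (RingCon.mkₐ k IZ.ringCon).comp (π : H →ₐ[k] H')
    have hq : IK.ringCon ≤ RingCon.ker q.toRingHom := fun x y hxy ↦ by
      have h := hle ((IK.rel_iff x y).1 hxy)
      rw [TwoSidedIdeal.mem_comap, map_sub] at h
      exact (RingCon.eq _).2 ((IZ.rel_iff _ _).2 h)
    refine ⟨RingCon.liftₐ IK.ringCon q hq, fun y ↦ ?_, fun h ↦ rfl⟩
    obtain ⟨y, rfl⟩ := RingCon.mk'_surjective _ y
    obtain ⟨x, rfl⟩ := hπ y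
    exact ⟨IK.ringCon.mk' x, rfl⟩
  · have := hK.isHopfIdeal
    have := hZ.isHopfIdeal
    obtain ⟨p, hp⟩ := exists_surjective_bialgHom_quotient hπ (augmentationSpan k K).asIdeal
      (augmentationSpan k Z).asIdeal fun x hx ↦ (TwoSidedIdeal.mem_comap _).1 (hle hx)
    have := (Bialgebra.counitAlgHom k H).toRingHom.domain_nontrivial
    have := (Bialgebra.counitAlgHom k H').toRingHom.domain_nontrivial
    rw [hK.finrank_eq_mul_finrank_quotient hKnorm, hZ.finrank_eq_mul_finrank_quotient hZnorm,
      Nat.mul_div_cancel_left _ Module.finrank_pos, Nat.mul_div_cancel_left _ Module.finrank_pos]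
    exact finrank_dvd_finrank_of_surjective hp
end
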